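/- arXiv:1810.12965 — 2 statements merged into one kernel-verified Lean document; each statement's English description precedes it below -/
import Mathlib

section
/- Let p be a positive odd integer, q a positive even integer, and r = gcd(p,q). The set [M_{p,q}, ℝP²]₀ of based homotopy classes of continuous maps from M_{p,q} to the real projective plane is in bijection with the disjoint union ℤ/r ⊔ ℤ/p. -/
/-- Based homotopy classes of base-point-preserving continuous maps `(M, m₀) → (X, x₀)`:
the quotient of `{f : C(M, X) // f m₀ = x₀}` by homotopy relative to the base point. -/
def BasedHomotopyClasses (M X : Type*) [TopologicalSpace M] [TopologicalSpace X]
    (m₀ : M) (x₀ : X) : Type _ :=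
  Quot fun f g : {f : C(M, X) // f m₀ = x₀} =>
    ContinuousMap.HomotopicRel f.1 g.1 {m₀}

/-- The identifications `(0, z) ~ (0, e^{2πi/p} z)` and `(1, z) ~ (1, e^{2πi/q} z)` on the
cylinder `[0, 1] × S¹`. -/
def MpqRel (p q : ℕ) (a b : Set.Icc (0 : ℝ) 1 × Circle) : Prop :=
  ((a.1 : ℝ) = 0 ∧ (b.1 : ℝ) = 0 ∧ b.2 = Circle.exp (2 * Real.pi / p) * a.2) ∨
  ((a.1 : ℝ) = 1 ∧ (b.1 : ℝ) = 1 ∧ b.2 = Circle.exp (2 * Real.pi / q) * a.2)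

/-- The space `M_{p,q}`: the quotient of the cylinder `[0, 1] × S¹` by the identifications
`(0, z) ~ (0, e^{2πi/p} z)` and `(1, z) ~ (1, e^{2πi/q} z)`, with the quotient topology. -/
def Mpq (p q : ℕ) : Type := Quot (MpqRel p q)

noncomputable instance (p q : ℕ) : TopologicalSpace (Mpq p q) := instTopologicalSpaceQuot

/-- The base point of `M_{p,q}`: the class of `(0, 1)`. -/
noncomputable def mpqBasePoint (p q : ℕ) : Mpq p q :=
  Quot.mk _ (⟨0, by norm_num [Set.mem_Icc]⟩, 1)

/-- The real projective plane: the quotient of the unit sphere `S² ⊆ ℝ³` by the antipodal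
identification `x ~ −x`, with the quotient topology. -/
def RP2 : Type :=
  Quot fun x y : Metric.sphere (0 : EuclideanSpace ℝ (Fin 3)) 1 =>
    (y : EuclideanSpace ℝ (Fin 3)) = -(x : EuclideanSpace ℝ (Fin 3))

noncomputable instance : TopologicalSpace RP2 := instTopologicalSpaceQuot

/-- The base point of `ℝP²`: the class of `(1, 0, 0)`. -/
noncomputable def rp2BasePoint : RP2 :=
  Quot.mk _ ⟨EuclideanSpace.single (0 : Fin 3) (1 : ℝ), by
    simp [EuclideanSpace.norm_single]⟩

/-!
The unit quaternions act on `ℝP²`, and the stabiliser of the base point is the union of the circle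
through `1` and `i` and of its coset through `j`. A based map on `M_{p,q}` is therefore `G • [i]`
for a quaternion-valued map `G` on the strip `[0, 1] × ℝ`. Translating by `1/p` at the left end, or
by `1/q` at the right end, multiplies `G` by an element of the stabiliser. The `p`-th power of the
left multiplier and the `q`-th power of the right one both lie in the component by which the unit
translation multiplies `G`; as `p` is odd and `q` is even, the left multiplier lies in the circle,
while the right one may lie in either component `κ`. The remaining freedom is an integer `n`,
comparing the windings at the two ends. Changing the lift at the left end alters `n` by multiples
of `p`; changing it at the right end alters `n` by multiples of `q`, but only if `κ` is trivial,
because conjugation by `j` inverts the circle. Finally `(κ, n)` determines the homotopy class: two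
maps with the same pair differ by a map from `M_{p,q}` to `S³`, which is null-homotopic because a
smooth approximation to it misses a direction.
-/

open scoped unitInterval
open Quaternion Topology

noncomputable section

theorem nonempty_equiv_of_surjective {X A B : Type*} {f : X → A} {g : X → B}
    (hf : Function.Surjective f) (hg : Function.Surjective g)
    (hfg : ∀ x y, f x = f y ↔ g x = g y) : Nonempty (A ≃ B) := by
  have hker : Setoid.ker f = Setoid.ker g := Setoid.ext hfg
  exact ⟨(Setoid.quotientKerEquivOfSurjective f hf).symm.trans <|
    (Quotient.congrRight fun x y => by rw [hker]).trans <|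
      Setoid.quotientKerEquivOfSurjective g hg⟩

theorem iterate_mul_right {M : Type*} [Monoid M] {F : ℝ → M} {h : ℝ} {a : M}
    (hF : ∀ x, F (x + h) = F x * a) (n : ℕ) (x : ℝ) : F (x + n * h) = F x * a ^ n := by
  induction n with
  | zero => simp
  | succ n ih =>
    rw [show x + ((n + 1 : ℕ) : ℝ) * h = x + n * h + h by push_cast; ring, hF, ih, pow_succ,
      mul_assoc]

/-! ### Sphere-valued maps -/

section SphereValuedMaps

variable {X V : Type*} [TopologicalSpace X] [NormedAddCommGroup V] [NormedSpace ℝ V]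

/-- The map to the unit sphere obtained by normalising a nowhere vanishing map. -/
def toUnitSphere (F : C(X, V)) (hF : ∀ x, F x ≠ 0) : C(X, Metric.sphere (0 : V) 1) where
  toFun x := ⟨NormedSpace.normalize (F x),
    mem_sphere_zero_iff_norm.2 (NormedSpace.norm_normalize_eq_one_iff.2 (hF x))⟩
  continuous_toFun := Continuous.subtype_mk
    ((F.continuous.norm.inv₀ fun x => norm_ne_zero_iff.2 (hF x)).smul F.continuous) _

theorem coe_toUnitSphere (F : C(X, V)) (hF : ∀ x, F x ≠ 0) (x : X) :
    (toUnitSphere F hF x : V) = NormedSpace.normalize (F x) := rfl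

theorem toUnitSphere_apply_eq {F : C(X, V)} {hF : ∀ x, F x ≠ 0} {x : X}
    {v : Metric.sphere (0 : V) 1} (h : F x = v) : toUnitSphere F hF x = v :=
  Subtype.ext <| by
    rw [coe_toUnitSphere, h,
      NormedSpace.normalize_eq_self_of_norm_eq_one (mem_sphere_zero_iff_norm.1 v.2)]

theorem toUnitSphere_homotopic {F F' : C(X, V)} {hF : ∀ x, F x ≠ 0} {hF' : ∀ x, F' x ≠ 0}
    (h : ∀ (t : I) x, AffineMap.lineMap (F x) (F' x) (t : ℝ) ≠ 0) :
    (toUnitSphere F hF).Homotopic (toUnitSphere F' hF') := by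
  let L : C(I × X, V) := ⟨fun z => AffineMap.lineMap (F z.2) (F' z.2) (z.1 : ℝ), by
    simp only [AffineMap.lineMap_apply_module]; fun_prop⟩
  exact ⟨⟨toUnitSphere L fun z => h z.1 z.2,
    fun x => Subtype.ext <| by simp [coe_toUnitSphere, L],
    fun x => Subtype.ext <| by simp [coe_toUnitSphere, L]⟩⟩

theorem lineMap_ne_zero_of_norm_sub_lt {v w : V} (h : ‖w - v‖ < ‖v‖) (t : I) :
    AffineMap.lineMap v w (t : ℝ) ≠ 0 := by
  intro h0
  have hv : v = -((t : ℝ) • (w - v)) := by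
    rw [AffineMap.lineMap_apply_module'] at h0
    exact eq_neg_of_add_eq_zero_right h0
  have hle : ‖v‖ ≤ ‖w - v‖ := by
    conv_lhs => rw [hv, norm_neg, norm_smul, Real.norm_of_nonneg t.2.1]
    exact mul_le_of_le_one_left (norm_nonneg _) t.2.2
  exact hle.not_gt h

theorem lineMap_ne_zero_of_forall_ne_smul {v A : V} (hv : v ≠ 0) (hA : ∀ c : ℝ, c • v ≠ A)
    (t : ℝ) : AffineMap.lineMap v A t ≠ 0 := by
  rw [AffineMap.lineMap_apply_module]
  intro h
  rcases eq_or_ne t 0 with rfl | ht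
  · exact hv (by simpa using h)
  · refine hA (-(1 - t) / t) ?_
    rw [div_eq_inv_mul, mul_smul, neg_smul, neg_eq_of_add_eq_zero_right h, inv_smul_smul₀ ht]

variable {E : Type*} [NormedAddCommGroup E] [NormedSpace ℝ E] [FiniteDimensional ℝ V]

-- The cone over the image of `f` is the image of a `C¹` map from `ℝ × E`.
theorem exists_forall_smul_ne [FiniteDimensional ℝ E]
    (hdim : Module.finrank ℝ E + 1 < Module.finrank ℝ V) {f : E → V} (hf : ContDiff ℝ 1 f) :
    ∃ A : V, ∀ (c : ℝ) (x : E), c • f x ≠ A := by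
  have hcone : ContDiff ℝ 1 fun z : ℝ × E => z.1 • f z.2 :=
    contDiff_fst.smul (hf.comp contDiff_snd)
  have hrank : Module.finrank ℝ (ℝ × E) < Module.finrank ℝ V := by
    rwa [Module.finrank_prod, Module.finrank_self, add_comm]
  obtain ⟨A, hA⟩ := (hcone.dense_compl_range_of_finrank_lt_finrank hrank).nonempty
  exact ⟨A, fun c x h => hA ⟨(c, x), h⟩⟩

/-- The continuous functions on `X` whose pullback along `π : W → X` extends, along
`ι : W → E`, to a `C¹` function on the normed space `E`. -/
def smoothSubalgebra {W : Type*} (ι : W → E) (π : W → X) : Subalgebra ℝ C(X, ℝ) where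
  carrier := {φ | ∃ Φ : E → ℝ, ContDiff ℝ 1 Φ ∧ ∀ w, Φ (ι w) = φ (π w)}
  mul_mem' := by
    rintro a b ⟨A, hA, hAa⟩ ⟨B, hB, hBb⟩
    exact ⟨fun z => A z * B z, hA.mul hB, fun w => by simp [hAa, hBb]⟩
  add_mem' := by
    rintro a b ⟨A, hA, hAa⟩ ⟨B, hB, hBb⟩
    exact ⟨fun z => A z + B z, hA.add hB, fun w => by simp [hAa, hBb]⟩
  algebraMap_mem' r := ⟨fun _ => r, contDiff_const, fun _ => rfl⟩

variable [CompactSpace X] {W : Type*} {ι : W → E} {π : W → X}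

theorem exists_contDiff_approx (hsep : (smoothSubalgebra ι π).SeparatesPoints) (K : C(X, V))
    {ε : ℝ} (hε : 0 < ε) :
    ∃ (T : C(X, V)) (f : E → V), ContDiff ℝ 1 f ∧ (∀ w, f (ι w) = T (π w)) ∧
      ∀ x, ‖T x - K x‖ < ε := by
  let b := Module.finBasis ℝ V
  have hpos : 0 < ∑ i, ‖b i‖ + 1 := by positivity
  have happrox (i) : ∃ φ ∈ smoothSubalgebra ι π,
      ∀ x, ‖φ x - b.coord i (K x)‖ < ε / (∑ i, ‖b i‖ + 1) := by
    have hc : Continuous fun x => b.coord i (K x) :=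
      (LinearMap.continuous_of_finiteDimensional _).comp K.continuous
    obtain ⟨φ, hφ⟩ := ContinuousMap.exists_mem_subalgebra_near_continuous_of_separatesPoints
      (smoothSubalgebra ι π) hsep _ hc _ (div_pos hε hpos)
    exact ⟨φ, φ.2, hφ⟩
  choose φ hφ hφK using happrox
  choose Φ hΦ hΦφ using hφ
  refine ⟨⟨fun x => ∑ i, φ i x • b i, by fun_prop⟩, fun z => ∑ i, Φ i z • b i,
    ContDiff.sum fun i _ => (hΦ i).smul contDiff_const, fun w => by simp [hΦφ], fun x => ?_⟩
  calc ‖∑ i, φ i x • b i - K x‖ = ‖∑ i, (φ i x - b.coord i (K x)) • b i‖ := by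
        conv_lhs => rw [← b.sum_repr (K x)]
        simp only [← Finset.sum_sub_distrib, ← sub_smul, Module.Basis.coord_apply]
    _ ≤ ∑ i, ε / (∑ i, ‖b i‖ + 1) * ‖b i‖ := by
        refine norm_sum_le_of_le _ fun i _ => ?_
        rw [norm_smul]
        exact mul_le_mul_of_nonneg_right (hφK i x).le (norm_nonneg _)
    _ < ε := by
        rw [← Finset.mul_sum, div_mul_eq_mul_div, div_lt_iff₀ hpos]
        nlinarith

theorem sphereMap_nullhomotopic [FiniteDimensional ℝ E]
    (hdim : Module.finrank ℝ E + 1 < Module.finrank ℝ V)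
    (hπ : Function.Surjective π) (hsep : (smoothSubalgebra ι π).SeparatesPoints)
    (K : C(X, Metric.sphere (0 : V) 1)) : K.Nullhomotopic := by
  let K' : C(X, V) := ⟨fun x => K x, by fun_prop⟩
  have hnorm (x) : ‖K' x‖ = 1 := mem_sphere_zero_iff_norm.1 (K x).2
  have hK' (x) : K' x ≠ 0 := norm_ne_zero_iff.1 (by simp [hnorm])
  obtain ⟨T, f, hf, hfT, hTK⟩ := exists_contDiff_approx hsep K' one_pos
  have hline (t : I) (x) : AffineMap.lineMap (K' x) (T x) (t : ℝ) ≠ 0 :=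
    lineMap_ne_zero_of_norm_sub_lt ((hTK x).trans_eq (hnorm x).symm) t
  have hT (x) : T x ≠ 0 := by simpa using hline 1 x
  obtain ⟨A, hA⟩ := exists_forall_smul_ne hdim hf
  have hAT (x) (c : ℝ) : c • T x ≠ A := by
    obtain ⟨w, rfl⟩ := hπ x
    exact hfT w ▸ hA c (ι w)
  have hA0 : A ≠ 0 := fun h => hA 0 0 (by simp [h])
  refine ⟨⟨_, mem_sphere_zero_iff_norm.2 (NormedSpace.norm_normalize_eq_one_iff.2 hA0)⟩, ?_⟩
  have hKT : K = toUnitSphere K' hK' :=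
    ContinuousMap.ext fun x => (toUnitSphere_apply_eq rfl).symm
  rw [hKT]
  exact (toUnitSphere_homotopic (hF' := hT) hline).trans <|
    toUnitSphere_homotopic (F' := ContinuousMap.const X A) (hF' := fun _ => hA0) fun t x =>
      lineMap_ne_zero_of_forall_ne_smul (hT x) (hAT x) t

end SphereValuedMaps

/-! ### Unit quaternions -/

/-- The topological group of unit quaternions, the three-sphere. -/
abbrev UnitQuaternion : Type := Metric.sphere (0 : ℍ[ℝ]) 1

-- Shortcuts: finding these by unification among the structures on spheres can time out.
instance : Group UnitQuaternion := inferInstance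
instance : Monoid UnitQuaternion := inferInstance

/-- The two-sphere of unit vectors of `ℝ³`. -/
abbrev UnitVector : Type := Metric.sphere (0 : EuclideanSpace ℝ (Fin 3)) 1

/-- `ℝ³` as the space of purely imaginary quaternions. -/
def imaginary : EuclideanSpace ℝ (Fin 3) →ₗ[ℝ] ℍ[ℝ] where
  toFun v := ⟨0, v 0, v 1, v 2⟩
  map_add' _ _ := Quaternion.ext _ _ (add_zero 0).symm rfl rfl rfl
  map_smul' c _ := Quaternion.ext _ _ (mul_zero c).symm rfl rfl rfl

/-- The imaginary part of a quaternion as a vector of `ℝ³`. -/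
def imPart : ℍ[ℝ] →ₗ[ℝ] EuclideanSpace ℝ (Fin 3) where
  toFun x := !₂[x.imI, x.imJ, x.imK]
  map_add' x y := by ext i; fin_cases i <;> simp
  map_smul' c x := by ext i; fin_cases i <;> simp

@[simp] theorem re_imaginary (v) : (imaginary v).re = 0 := rfl
@[simp] theorem imI_imaginary (v) : (imaginary v).imI = v 0 := rfl
@[simp] theorem imJ_imaginary (v) : (imaginary v).imJ = v 1 := rfl
@[simp] theorem imK_imaginary (v) : (imaginary v).imK = v 2 := rfl

@[simp] theorem imPart_apply_zero (x) : imPart x 0 = x.imI := rfl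
@[simp] theorem imPart_apply_one (x) : imPart x 1 = x.imJ := rfl
@[simp] theorem imPart_apply_two (x) : imPart x 2 = x.imK := rfl

theorem imaginary_imPart {x : ℍ[ℝ]} (h : x.re = 0) : imaginary (imPart x) = x := by
  ext <;> simp [h]

theorem imPart_imaginary (v : EuclideanSpace ℝ (Fin 3)) : imPart (imaginary v) = v := by
  ext i; fin_cases i <;> simp

theorem norm_sq_quaternion (x : ℍ[ℝ]) :
    ‖x‖ ^ 2 = x.re ^ 2 + x.imI ^ 2 + x.imJ ^ 2 + x.imK ^ 2 := by
  rw [sq, ← Quaternion.normSq_eq_norm_mul_self, Quaternion.normSq_def']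

theorem norm_imaginary (v : EuclideanSpace ℝ (Fin 3)) : ‖imaginary v‖ = ‖v‖ := by
  rw [← sq_eq_sq₀ (norm_nonneg _) (norm_nonneg _), norm_sq_quaternion, EuclideanSpace.norm_sq_eq]
  simp [Fin.sum_univ_three]

theorem UnitVector.sq_add_sq_add_sq (u : UnitVector) : u.1 0 ^ 2 + u.1 1 ^ 2 + u.1 2 ^ 2 = 1 := by
  have h : ‖u.1‖ ^ 2 = 1 := by rw [mem_sphere_zero_iff_norm.1 u.2, one_pow]
  rw [EuclideanSpace.norm_sq_eq] at h
  simpa [Fin.sum_univ_three] using h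

namespace UnitQuaternion

theorem sum_sq (g : UnitQuaternion) :
    g.1.re ^ 2 + g.1.imI ^ 2 + g.1.imJ ^ 2 + g.1.imK ^ 2 = 1 := by
  rw [← norm_sq_quaternion, mem_sphere_zero_iff_norm.1 g.2, one_pow]

theorem mem_sphere_of_sum_sq {x : ℍ[ℝ]} (h : x.re ^ 2 + x.imI ^ 2 + x.imJ ^ 2 + x.imK ^ 2 = 1) :
    x ∈ Metric.sphere (0 : ℍ[ℝ]) 1 := by
  rw [mem_sphere_zero_iff_norm, ← pow_eq_one_iff_of_nonneg (norm_nonneg _) two_ne_zero,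
    norm_sq_quaternion, h]

/-- `turn u` is the one-parameter subgroup of unit quaternions along the imaginary direction `u`,
with period `1`. -/
def turn (u : UnitVector) (x : ℝ) : UnitQuaternion :=
  ⟨(Real.cos (2 * Real.pi * x) : ℝ) + Real.sin (2 * Real.pi * x) • imaginary u.1,
    mem_sphere_of_sum_sq <| by
      simp only [Quaternion.re_add, Quaternion.imI_add, Quaternion.imJ_add, Quaternion.imK_add,
        Quaternion.re_coe, Quaternion.imI_coe, Quaternion.imJ_coe, Quaternion.imK_coe,
        Quaternion.re_smul, Quaternion.imI_smul, Quaternion.imJ_smul, Quaternion.imK_smul,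
        re_imaginary, imI_imaginary, imJ_imaginary, imK_imaginary, smul_eq_mul]
      linear_combination (Real.sin (2 * Real.pi * x)) ^ 2 * u.sq_add_sq_add_sq
        + Real.sin_sq_add_cos_sq (2 * Real.pi * x)⟩

variable (u : UnitVector)

theorem coe_turn (x : ℝ) : (turn u x : ℍ[ℝ]) =
    (Real.cos (2 * Real.pi * x) : ℝ) + Real.sin (2 * Real.pi * x) • imaginary u.1 := rfl

theorem re_turn (x : ℝ) : (turn u x : ℍ[ℝ]).re = Real.cos (2 * Real.pi * x) := by
  simp [coe_turn]

theorem imI_turn (x : ℝ) : (turn u x : ℍ[ℝ]).imI = Real.sin (2 * Real.pi * x) * u.1 0 := by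
  simp [coe_turn]

theorem imJ_turn (x : ℝ) : (turn u x : ℍ[ℝ]).imJ = Real.sin (2 * Real.pi * x) * u.1 1 := by
  simp [coe_turn]

theorem imK_turn (x : ℝ) : (turn u x : ℍ[ℝ]).imK = Real.sin (2 * Real.pi * x) * u.1 2 := by
  simp [coe_turn]

theorem imPart_turn (x : ℝ) : imPart (turn u x : ℍ[ℝ]) = Real.sin (2 * Real.pi * x) • u.1 := by
  ext i; fin_cases i <;> simp [imI_turn, imJ_turn, imK_turn]

theorem turn_add (x y : ℝ) : turn u (x + y) = turn u x * turn u y := by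
  have hu := u.sq_add_sq_add_sq
  apply Subtype.ext
  ext <;> simp only [Metric.unitSphere.coe_mul, Quaternion.re_mul, Quaternion.imI_mul,
    Quaternion.imJ_mul, Quaternion.imK_mul, re_turn, imI_turn, imJ_turn, imK_turn, mul_add,
    Real.cos_add, Real.sin_add]
  · linear_combination (Real.sin (2 * Real.pi * x) * Real.sin (2 * Real.pi * y)) * hu
  all_goals ring

@[simp] theorem turn_zero : turn u 0 = 1 := by
  apply Subtype.ext
  simp [coe_turn]

theorem turn_neg (x : ℝ) : turn u (-x) = (turn u x)⁻¹ := by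
  rw [eq_inv_iff_mul_eq_one, ← turn_add, neg_add_cancel, turn_zero]

theorem contDiff_turn : ContDiff ℝ 1 fun x => (turn u x : ℍ[ℝ]) := by
  have hcos : ContDiff ℝ 1 fun x => algebraMap ℝ ℍ[ℝ] (Real.cos (2 * Real.pi * x)) :=
    (Algebra.linearMap ℝ ℍ[ℝ]).toContinuousLinearMap.contDiff.comp
      (Real.contDiff_cos.comp (by fun_prop))
  exact hcos.add ((Real.contDiff_sin.comp (by fun_prop)).smul contDiff_const)

@[fun_prop]
theorem continuous_turn : Continuous (turn u) :=
  (contDiff_turn u).continuous.subtype_mk _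

variable {u}

theorem turn_eq_turn_iff {x y : ℝ} : turn u x = turn u y ↔ ∃ n : ℤ, x = y + n := by
  constructor
  · intro h
    have hu : (u : EuclideanSpace ℝ (Fin 3)) ≠ 0 := Metric.ne_of_mem_sphere u.2 one_ne_zero
    have hcos := re_turn u x ▸ re_turn u y ▸ congrArg (fun g : UnitQuaternion => g.1.re) h
    have hsin := imPart_turn u x ▸ imPart_turn u y ▸
      congrArg (fun g : UnitQuaternion => imPart g.1) h
    obtain ⟨n, hn⟩ := Real.Angle.angle_eq_iff_two_pi_dvd_sub.1
      (Real.Angle.cos_sin_inj hcos (smul_left_injective ℝ hu hsin))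
    refine ⟨n, mul_left_cancel₀ Real.two_pi_pos.ne' ?_⟩
    linear_combination hn
  · rintro ⟨n, rfl⟩
    apply Subtype.ext
    simp only [coe_turn]
    rw [show 2 * Real.pi * (y + n) = 2 * Real.pi * y + n * (2 * Real.pi) by ring,
      Real.cos_add_int_mul_two_pi, Real.sin_add_int_mul_two_pi]

theorem exists_int_eq_add_of_turn_eq {T : Type*} [TopologicalSpace T] [PreconnectedSpace T]
    [Nonempty T] {F F' : T → ℝ} (hF : Continuous F) (hF' : Continuous F')
    (h : ∀ t, turn u (F t) = turn u (F' t)) : ∃ n : ℤ, ∀ t, F t = F' t + n := by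
  choose n hn using fun t => turn_eq_turn_iff.1 (h t)
  have hcont : Continuous n := Int.isClosedEmbedding_coe_real.isInducing.continuous_iff.2 <| by
    convert hF.sub hF' using 1
    exact funext fun t => by simp [hn t]
  obtain ⟨t₀⟩ := ‹Nonempty T›
  exact ⟨n t₀, fun t => by rw [hn t, PreconnectedSpace.constant ‹_› hcont]⟩

/-- The unit vector `i` of `ℝ³`, whose class is the base point of the projective plane. -/
def vecI : UnitVector := ⟨EuclideanSpace.single 0 1, by simp⟩

/-- The unit vector `j` of `ℝ³`. -/
def vecJ : UnitVector := ⟨EuclideanSpace.single 1 1, by simp⟩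

end UnitQuaternion

local notation "𝐞" => UnitQuaternion.turn UnitQuaternion.vecI

/-! ### The action on the projective plane -/

namespace UnitQuaternion

theorem continuous_imaginary : Continuous imaginary :=
  imaginary.continuous_of_finiteDimensional

theorem continuous_imPart : Continuous imPart :=
  imPart.continuous_of_finiteDimensional

theorem re_conj_imaginary (g : ℍ[ℝ]) (v : EuclideanSpace ℝ (Fin 3)) :
    (g * imaginary v * star g).re = 0 := by
  simp only [Quaternion.re_mul, Quaternion.imI_mul, Quaternion.imJ_mul, Quaternion.imK_mul,
    Quaternion.re_star, Quaternion.imI_star, Quaternion.imJ_star, Quaternion.imK_star, re_imaginary]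
  ring

instance : MulAction UnitQuaternion UnitVector where
  smul g v := ⟨imPart (g.1 * imaginary v.1 * star g.1), by
    rw [mem_sphere_zero_iff_norm, ← norm_imaginary, imaginary_imPart (re_conj_imaginary _ _),
      norm_mul, norm_mul, norm_star, norm_imaginary, mem_sphere_zero_iff_norm.1 g.2,
      mem_sphere_zero_iff_norm.1 v.2, one_mul, one_mul]⟩
  one_smul v := Subtype.ext <| by
    change imPart (1 * imaginary v.1 * star 1) = v.1
    rw [one_mul, star_one, mul_one, imPart_imaginary]
  mul_smul g h v := Subtype.ext <| by
    change imPart (g.1 * h.1 * imaginary v.1 * star (g.1 * h.1)) =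
      imPart (g.1 * imaginary (imPart (h.1 * imaginary v.1 * star h.1)) * star g.1)
    rw [imaginary_imPart (re_conj_imaginary _ _), star_mul]
    simp only [mul_assoc]

theorem coe_smul (g : UnitQuaternion) (v : UnitVector) :
    ((g • v : UnitVector) : EuclideanSpace ℝ (Fin 3)) =
      imPart (g.1 * imaginary v.1 * star g.1) := rfl

theorem smul_neg (g : UnitQuaternion) (v : UnitVector) : g • (-v) = -(g • v) :=
  Subtype.ext <| by simp only [coe_smul, coe_neg_sphere, map_neg, mul_neg, neg_mul]

instance : ContinuousSMul UnitQuaternion UnitVector where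
  continuous_smul := by
    have := continuous_imaginary
    refine Continuous.subtype_mk (continuous_imPart.comp ?_) _
    fun_prop

end UnitQuaternion

namespace RP2

open UnitQuaternion (smul_neg)

/-- The quotient map from the two-sphere onto the projective plane. -/
def mk (v : UnitVector) : RP2 := Quot.mk _ v

theorem mk_neg (v : UnitVector) : mk (-v) = mk v :=
  Quot.sound (by rw [coe_neg_sphere, neg_neg])

theorem mk_eq_mk_iff {v w : UnitVector} : mk v = mk w ↔ w = v ∨ w = -v := by
  constructor
  · intro h
    let fiber : RP2 → Set UnitVector := Quot.lift (fun v => {v, -v}) fun x y hxy => by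
      obtain rfl : y = -x := Subtype.ext hxy
      rw [neg_neg, Set.pair_comm]
    have hfiber : ({v, -v} : Set UnitVector) = {w, -w} := congrArg fiber h
    exact (hfiber ▸ Set.mem_insert w {-w} : w ∈ ({v, -v} : Set UnitVector))
  · rintro (rfl | rfl)
    exacts [rfl, (mk_neg v).symm]

theorem isOpenQuotientMap_mk : IsOpenQuotientMap mk := by
  refine ⟨Quot.mk_surjective, continuous_quot_mk, fun U hU => ?_⟩
  have hpre : mk ⁻¹' (mk '' U) = U ∪ Neg.neg ⁻¹' U := by
    ext v
    simp only [Set.mem_preimage, Set.mem_image, eq_comm (b := mk v), mk_eq_mk_iff, Set.mem_union]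
    constructor
    · rintro ⟨w, hw, rfl | rfl⟩
      exacts [.inl hw, .inr hw]
    · rintro (h | h)
      exacts [⟨v, h, .inl rfl⟩, ⟨-v, h, .inr rfl⟩]
  exact isQuotientMap_quot_mk.isOpen_preimage.1 (hpre ▸ hU.union (hU.preimage continuous_neg))

instance : MulAction UnitQuaternion RP2 where
  smul g := Quot.map (g • ·) fun v w hvw => by
    obtain rfl : w = -v := Subtype.ext hvw
    rw [smul_neg, coe_neg_sphere]
  one_smul := by
    rintro ⟨v⟩
    exact congrArg mk (one_smul UnitQuaternion v)
  mul_smul g h := by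
    rintro ⟨v⟩
    exact congrArg mk (mul_smul g h v)

instance : ContinuousSMul UnitQuaternion RP2 where
  continuous_smul :=
    (IsOpenQuotientMap.id.prodMap isOpenQuotientMap_mk).isQuotientMap.continuous_iff.2 <|
      isOpenQuotientMap_mk.continuous.comp (continuous_smul (M := UnitQuaternion))

end RP2

namespace UnitQuaternion

theorem vecI_apply_zero : vecI.1 0 = 1 := by simp [vecI]
theorem vecI_apply_one : vecI.1 1 = 0 := by simp [vecI]
theorem vecI_apply_two : vecI.1 2 = 0 := by simp [vecI]

/-- The circle of unit quaternions in the plane spanned by `1` and `i`. -/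
def circleSubgroup : Subgroup UnitQuaternion where
  carrier := {g | g.1.imJ = 0 ∧ g.1.imK = 0}
  one_mem' := ⟨rfl, rfl⟩
  mul_mem' := by
    rintro g h ⟨hgJ, hgK⟩ ⟨hhJ, hhK⟩
    simp [hgJ, hgK, hhJ, hhK]
  inv_mem' := by
    rintro g ⟨hJ, hK⟩
    simp [Quaternion.inv_def, hJ, hK]

theorem mem_circleSubgroup {g : UnitQuaternion} :
    g ∈ circleSubgroup ↔ g.1.imJ = 0 ∧ g.1.imK = 0 := Iff.rfl

theorem isClosed_circleSubgroup : IsClosed (circleSubgroup : Set UnitQuaternion) :=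
  (isClosed_eq (Quaternion.continuous_imJ.comp continuous_subtype_val) continuous_const).inter
    (isClosed_eq (Quaternion.continuous_imK.comp continuous_subtype_val) continuous_const)

theorem turn_vecI_mem_circleSubgroup (x : ℝ) : 𝐞 x ∈ circleSubgroup := by
  simp [mem_circleSubgroup, coe_turn, vecI]

theorem smul_vecI_apply_zero (g : UnitQuaternion) :
    (g • vecI).1 0 = g.1.re ^ 2 + g.1.imI ^ 2 - g.1.imJ ^ 2 - g.1.imK ^ 2 := by
  simp only [coe_smul, imPart_apply_zero, Quaternion.re_mul, Quaternion.imI_mul, Quaternion.imJ_mul,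
    Quaternion.imK_mul, Quaternion.re_star, Quaternion.imI_star, Quaternion.imJ_star,
    Quaternion.imK_star, re_imaginary, imI_imaginary, imJ_imaginary, imK_imaginary,
    vecI_apply_zero, vecI_apply_one, vecI_apply_two]
  ring

theorem smul_vecI_eq_iff {g : UnitQuaternion} : g • vecI = vecI ↔ g ∈ circleSubgroup := by
  have hsum := g.sum_sq
  have hfirst := smul_vecI_apply_zero g
  constructor
  · intro h
    rw [h, vecI_apply_zero] at hfirst
    constructor <;> nlinarith
  · rintro ⟨hJ, hK⟩
    apply Subtype.ext
    ext i
    fin_cases i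
    · change (g • vecI).1 0 = vecI.1 0
      rw [hfirst, vecI_apply_zero]
      linear_combination hsum - 2 * g.1.imJ * hJ - 2 * g.1.imK * hK
    all_goals simp [coe_smul, vecI, hJ, hK]

/-- The angle whose turn about `j` is `1` or `j`. -/
def twistAngle (κ : Bool) : ℝ := if κ then 1 / 4 else 0

/-- Representatives `1` and `j` of the two components of the stabiliser of the base point. -/
def twist (κ : Bool) : UnitQuaternion := turn vecJ (twistAngle κ)

@[simp] theorem twist_false : twist false = 1 := by simp [twist, twistAngle]

theorem coe_twist_true : (twist true : ℍ[ℝ]) = imaginary vecJ.1 := by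
  have h : 2 * Real.pi * (1 / 4) = Real.pi / 2 := by ring
  simp [twist, twistAngle, coe_turn, h, -one_div]

theorem twist_true_smul_vecI : twist true • vecI = -vecI := by
  apply Subtype.ext
  ext i
  fin_cases i <;> simp [coe_smul, coe_twist_true, vecI, vecJ]

theorem twist_true_mul_turn (x : ℝ) : twist true * 𝐞 x = 𝐞 (-x) * twist true := by
  apply Subtype.ext
  ext <;> simp [coe_turn, coe_twist_true, vecI, vecJ]

theorem smul_basePoint_eq_iff {g : UnitQuaternion} :
    g • rp2BasePoint = rp2BasePoint ↔ ∃ κ, (twist κ)⁻¹ * g ∈ circleSubgroup := by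
  have hmk : g • rp2BasePoint = rp2BasePoint ↔ g • vecI = vecI ∨ g • vecI = -vecI := by
    rw [eq_comm]
    exact RP2.mk_eq_mk_iff
  rw [hmk, Bool.exists_bool, twist_false, inv_one, one_mul, ← smul_vecI_eq_iff,
    ← smul_vecI_eq_iff, mul_smul, inv_smul_eq_iff, twist_true_smul_vecI]

theorem twist_smul_basePoint (κ : Bool) : twist κ • rp2BasePoint = rp2BasePoint :=
  smul_basePoint_eq_iff.2 ⟨κ, by simp [one_mem]⟩

theorem turn_vecI_smul_basePoint (x : ℝ) : 𝐞 x • rp2BasePoint = rp2BasePoint :=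
  smul_basePoint_eq_iff.2 ⟨false, by simpa using turn_vecI_mem_circleSubgroup x⟩

theorem twist_mem_circleSubgroup_iff {κ : Bool} : twist κ ∈ circleSubgroup ↔ κ = false := by
  cases κ
  · simp [one_mem]
  · simp [mem_circleSubgroup, coe_twist_true, vecJ]

theorem twist_index_unique {κ κ' : Bool} {g : UnitQuaternion}
    (h : (twist κ)⁻¹ * g ∈ circleSubgroup) (h' : (twist κ')⁻¹ * g ∈ circleSubgroup) : κ = κ' := by
  have hmem : (twist κ)⁻¹ * twist κ' ∈ circleSubgroup := by
    simpa [mul_assoc] using mul_mem h (inv_mem h')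
  cases κ <;> cases κ' <;> simp_all [twist_mem_circleSubgroup_iff]

theorem exists_twist_of_forall_smul_basePoint {T : Type*} [TopologicalSpace T]
    [PreconnectedSpace T] (g : C(T, UnitQuaternion))
    (hg : ∀ t, g t • rp2BasePoint = rp2BasePoint) :
    ∃ κ, ∀ t, (twist κ)⁻¹ * g t ∈ circleSubgroup := by
  let S (κ : Bool) : Set T := {t | (twist κ)⁻¹ * g t ∈ circleSubgroup}
  have hclosed (κ) : IsClosed (S κ) := isClosed_circleSubgroup.preimage (by fun_prop)
  have hcover : Set.univ ⊆ S false ∪ S true := fun t _ =>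
    Bool.exists_bool.1 (smul_basePoint_eq_iff.1 (hg t))
  have hdisj : Set.univ ∩ (S false ∩ S true) = ∅ := Set.eq_empty_of_forall_notMem fun t ht =>
    Bool.false_ne_true (twist_index_unique ht.2.1 ht.2.2)
  exact (isPreconnected_iff_subset_of_disjoint_closed.1 isPreconnected_univ _ _
    (hclosed false) (hclosed true) hcover hdisj).elim
    (fun h => ⟨false, fun t => h (Set.mem_univ t)⟩) fun h => ⟨true, fun t => h (Set.mem_univ t)⟩

/-- A continuous family in `circleSubgroup`, viewed as a family of complex numbers. -/
def toCircle {T : Type*} [TopologicalSpace T] (g : C(T, UnitQuaternion))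
    (hg : ∀ t, g t ∈ circleSubgroup) : C(T, Circle) where
  toFun t := ⟨⟨(g t).1.re, (g t).1.imI⟩, mem_sphere_zero_iff_norm.2 <| by
    have hsum := (g t).sum_sq
    rw [(hg t).1, (hg t).2] at hsum
    rw [← pow_eq_one_iff_of_nonneg (norm_nonneg _) two_ne_zero, Complex.sq_norm,
      Complex.normSq_mk]
    linear_combination hsum⟩
  continuous_toFun := Continuous.subtype_mk
    (Complex.equivRealProdCLM.symm.continuous.comp
      ((Quaternion.continuous_re.comp (continuous_subtype_val.comp g.continuous)).prodMk
        (Quaternion.continuous_imI.comp (continuous_subtype_val.comp g.continuous)))) _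

theorem turn_vecI_eq_of_circleExp_eq {T : Type*} [TopologicalSpace T] {g : C(T, UnitQuaternion)}
    {hg : ∀ t, g t ∈ circleSubgroup} {t : T} {x : ℝ}
    (h : Circle.exp (2 * Real.pi * x) = toCircle g hg t) : 𝐞 x = g t := by
  have hexp : Complex.exp ((2 * Real.pi * x : ℝ) * Complex.I) = ⟨(g t).1.re, (g t).1.imI⟩ := by
    rw [← Circle.coe_exp, h]
    rfl
  have hre : Real.cos (2 * Real.pi * x) = (g t).1.re := by
    rw [← Complex.exp_ofReal_mul_I_re, hexp]
  have him : Real.sin (2 * Real.pi * x) = (g t).1.imI := by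
    rw [← Complex.exp_ofReal_mul_I_im, hexp]
  apply Subtype.ext
  ext <;> simp [coe_turn, vecI, hre, him, (hg t).1, (hg t).2]

theorem exists_turn_vecI_eq {T : Type*} [TopologicalSpace T] [SimplyConnectedSpace T]
    [LocallyPathConnectedSpace T] (g : C(T, UnitQuaternion)) (hg : ∀ t, g t ∈ circleSubgroup) :
    ∃ γ : C(T, ℝ), ∀ t, 𝐞 (γ t) = g t := by
  let c := toCircle g hg
  let t₀ : T := Classical.arbitrary T
  obtain ⟨x₀, hx₀⟩ := Circle.exp_surjective (c t₀)
  obtain ⟨L, ⟨-, hL⟩, -⟩ := Circle.isCoveringMap_exp.existsUnique_continuousMap_lifts c t₀ x₀ hx₀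
  refine ⟨⟨fun t => L t / (2 * Real.pi), by fun_prop⟩,
    fun t => turn_vecI_eq_of_circleExp_eq (hg := hg) ?_⟩
  have hcancel : 2 * Real.pi * (L t / (2 * Real.pi)) = L t :=
    mul_div_cancel₀ _ Real.two_pi_pos.ne'
  exact (congrArg Circle.exp hcancel).trans (congrFun hL t)

theorem exists_twist_mul_turn {T : Type*} [TopologicalSpace T] [SimplyConnectedSpace T]
    [LocallyPathConnectedSpace T] {g h : C(T, UnitQuaternion)}
    (hgh : ∀ t, g t • rp2BasePoint = h t • rp2BasePoint) :
    ∃ (κ : Bool) (γ : C(T, ℝ)), ∀ t, h t = g t * twist κ * 𝐞 (γ t) := by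
  obtain ⟨κ, hκ⟩ := exists_twist_of_forall_smul_basePoint (g⁻¹ * h) fun t => by
    rw [ContinuousMap.mul_apply, ContinuousMap.inv_apply, mul_smul, ← hgh, inv_smul_smul]
  obtain ⟨γ, hγ⟩ := exists_turn_vecI_eq (ContinuousMap.const T (twist κ)⁻¹ * (g⁻¹ * h)) hκ
  exact ⟨κ, γ, fun t => by simp [hγ, mul_assoc]⟩

theorem exists_mul_turn {T : Type*} [TopologicalSpace T] [SimplyConnectedSpace T]
    [LocallyPathConnectedSpace T] {g h : C(T, UnitQuaternion)}
    (hgh : ∀ t, g t • rp2BasePoint = h t • rp2BasePoint) {t₀ : T} (h₀ : g t₀ = h t₀) :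
    ∃ γ : C(T, ℝ), ∀ t, h t = g t * 𝐞 (γ t) := by
  obtain ⟨κ, γ, hγ⟩ := exists_twist_mul_turn hgh
  have hκ : twist κ ∈ circleSubgroup := by
    have h1 : twist κ * 𝐞 (γ t₀) = 1 := by simpa [h₀, mul_assoc] using (hγ t₀).symm
    rw [eq_inv_of_mul_eq_one_left h1]
    exact inv_mem (turn_vecI_mem_circleSubgroup _)
  obtain rfl := twist_mem_circleSubgroup_iff.1 hκ
  exact ⟨γ, fun t => by simpa using hγ t⟩

theorem exists_mul_turn_strip {g h : C(I × ℝ, UnitQuaternion)}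
    (hgh : ∀ z, g z • rp2BasePoint = h z • rp2BasePoint) {z₀ : I × ℝ} (h₀ : g z₀ = h z₀) :
    ∃ γ : C(I × ℝ, ℝ), ∀ z, h z = g z * 𝐞 (γ z) := by
  let r : C(ℝ × ℝ, I × ℝ) := ⟨fun z => (Set.projIcc 0 1 zero_le_one z.1, z.2), by fun_prop⟩
  have hr (z : I × ℝ) : r ((z.1 : ℝ), z.2) = z := by simp [r]
  obtain ⟨γ, hγ⟩ := exists_mul_turn (g := g.comp r) (h := h.comp r) (fun z => hgh (r z))
    (t₀ := ((z₀.1 : ℝ), z₀.2)) (by simp [hr, h₀])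
  exact ⟨γ.comp ⟨fun z => ((z.1 : ℝ), z.2), by fun_prop⟩, fun z => by
    simpa [hr] using hγ ((z.1 : ℝ), z.2)⟩

end UnitQuaternion

/-! ### Lifting homotopies and paths -/

namespace UnitVector

theorem imaginary_mul_self (v : UnitVector) : imaginary v.1 * imaginary v.1 = -1 := by
  ext
  · rw [Quaternion.re_mul, re_imaginary, imI_imaginary, imJ_imaginary, imK_imaginary,
      Quaternion.re_neg, Quaternion.re_one]
    linear_combination -v.sq_add_sq_add_sq
  all_goals simp [mul_comm]

/-- A quaternion carrying the line of `w` to the line of `v`, up to normalisation. It vanishes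
exactly when `v` and `w` are orthogonal, and it depends only on the lines of `v` and `w`. -/
def align (v w : UnitVector) : ℍ[ℝ] :=
  (|(imaginary v.1 * imaginary w.1).re| : ℝ) +
    (imaginary v.1 * imaginary w.1).re • (imaginary v.1 * imaginary w.1)

theorem align_neg_left (v w : UnitVector) : align (-v) w = align v w := by
  simp only [align, coe_neg_sphere, map_neg, neg_mul, Quaternion.re_neg, abs_neg, smul_neg,
    neg_smul, neg_neg]

theorem align_neg_right (v w : UnitVector) : align v (-w) = align v w := by
  simp only [align, coe_neg_sphere, map_neg, mul_neg, Quaternion.re_neg, abs_neg, smul_neg,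
    neg_smul, neg_neg]

theorem align_self (v : UnitVector) : align v v = (2 : ℝ) • (1 : ℍ[ℝ]) := by
  rw [align, imaginary_mul_self, Quaternion.re_neg, Quaternion.re_one, abs_neg, abs_one,
    neg_smul, one_smul, neg_neg, Quaternion.coe_one, two_smul]

theorem align_mul_imaginary (v w : UnitVector) :
    align v w * imaginary w.1 = imaginary v.1 * align v w ∨
      align v w * imaginary w.1 = imaginary (-v).1 * align v w := by
  let c := (imaginary v.1 * imaginary w.1).re
  have hw : align v w * imaginary w.1 = |c| • imaginary w.1 - c • imaginary v.1 := by
    rw [align, add_mul, smul_mul_assoc, mul_assoc, imaginary_mul_self, mul_neg_one, smul_neg,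
      Quaternion.coe_mul_eq_smul, sub_eq_add_neg]
  have hv : imaginary v.1 * align v w = |c| • imaginary v.1 - c • imaginary w.1 := by
    rw [align, mul_add, mul_smul_comm, ← mul_assoc, imaginary_mul_self, neg_one_mul, smul_neg,
      Quaternion.mul_coe_eq_smul, sub_eq_add_neg]
  rw [coe_neg_sphere, map_neg, neg_mul, hv, hw]
  rcases abs_choice c with h | h <;> rw [h]
  · exact .inr (neg_sub _ _).symm
  · exact .inl (by simp only [neg_smul]; abel)

theorem continuous_align : Continuous fun z : UnitVector × UnitVector => align z.1 z.2 := by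
  have him := UnitQuaternion.continuous_imaginary
  have hmul : Continuous fun z : UnitVector × UnitVector => imaginary z.1.1 * imaginary z.2.1 := by
    fun_prop
  have hre := Quaternion.continuous_re.comp hmul
  exact (Quaternion.continuous_coe.comp hre.abs).add (hre.smul hmul)

end UnitVector

theorem UnitQuaternion.smul_eq_of_normalize {g : UnitQuaternion} {D : ℍ[ℝ]} {v w : UnitVector}
    (hg : (g : ℍ[ℝ]) = NormedSpace.normalize D)
    (hD : D * imaginary w.1 = imaginary v.1 * D) : g • w = v := by
  have hunit : (g : ℍ[ℝ]) * star (g : ℍ[ℝ]) = 1 := by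
    rw [Quaternion.self_mul_star, Quaternion.normSq_eq_norm_mul_self,
      mem_sphere_zero_iff_norm.1 g.2, mul_one, Quaternion.coe_one]
  have hcomm : (g : ℍ[ℝ]) * imaginary w.1 = imaginary v.1 * g := by
    rw [hg, NormedSpace.normalize, smul_mul_assoc, hD, mul_smul_comm]
  exact Subtype.ext <| by rw [coe_smul, hcomm, mul_assoc, hunit, mul_one, imPart_imaginary]

namespace RP2

/-- A quaternion carrying the line `m` to the line `l`, up to normalisation. It vanishes exactly
when `l` and `m` are orthogonal. -/
def align (l m : RP2) : ℍ[ℝ] :=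
  Quot.lift₂ UnitVector.align
    (fun v w w' h => by
      obtain rfl : w' = -w := Subtype.ext h
      exact (UnitVector.align_neg_right v w).symm)
    (fun v v' w h => by
      obtain rfl : v' = -v := Subtype.ext h
      exact (UnitVector.align_neg_left v w).symm) l m

theorem continuous_align : Continuous fun z : RP2 × RP2 => align z.1 z.2 :=
  (isOpenQuotientMap_mk.prodMap isOpenQuotientMap_mk).isQuotientMap.continuous_iff.2
    UnitVector.continuous_align

theorem align_self (l : RP2) : align l l = (2 : ℝ) • (1 : ℍ[ℝ]) := by
  obtain ⟨v⟩ := l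
  exact UnitVector.align_self v

theorem smul_eq_of_normalize_align {g : UnitQuaternion} {l m : RP2}
    (hg : (g : ℍ[ℝ]) = NormedSpace.normalize (align l m)) : g • m = l := by
  obtain ⟨v⟩ := l
  obtain ⟨w⟩ := m
  rcases UnitVector.align_mul_imaginary v w with h | h
  · exact congrArg mk (UnitQuaternion.smul_eq_of_normalize hg h)
  · exact (congrArg mk (UnitQuaternion.smul_eq_of_normalize hg h)).trans (mk_neg v)

theorem exists_smul_of_align_ne_zero {X : Type*} [TopologicalSpace X] (F F' : C(X, RP2))
    (h : ∀ x, align (F' x) (F x) ≠ 0) :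
    ∃ K : C(X, UnitQuaternion), ∀ x, F' x = K x • F x ∧ (F' x = F x → K x = 1) := by
  let D : C(X, ℍ[ℝ]) := ⟨fun x => align (F' x) (F x),
    continuous_align.comp (F'.continuous.prodMk F.continuous)⟩
  refine ⟨toUnitSphere D h, fun x => ⟨(smul_eq_of_normalize_align rfl).symm, fun hx => ?_⟩⟩
  apply Subtype.ext
  change NormedSpace.normalize (align (F' x) (F x)) = 1
  rw [hx, align_self, NormedSpace.normalize_smul_of_pos two_pos,
    NormedSpace.normalize_eq_self_of_norm_eq_one norm_one]

variable {Y : Type*} [TopologicalSpace Y] [CompactSpace Y]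

theorem exists_isOpen_align_ne_zero (H : C(I × Y, RP2)) (t : I) :
    ∃ U : Set I, IsOpen U ∧ t ∈ U ∧ ∀ s ∈ U, ∀ s' ∈ U, ∀ y, align (H (s, y)) (H (s', y)) ≠ 0 := by
  have hcont : Continuous fun z : (I × I) × Y => align (H (z.1.1, z.2)) (H (z.1.2, z.2)) :=
    continuous_align.comp <|
      (H.continuous.comp (by fun_prop)).prodMk (H.continuous.comp (by fun_prop))
  have hnear (y : Y) : ∀ᶠ z : (I × I) × Y in 𝓝 ((t, t), y),
      align (H (z.1.1, z.2)) (H (z.1.2, z.2)) ≠ 0 :=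
    hcont.continuousAt.eventually_ne <| by
      rw [align_self]
      exact smul_ne_zero two_ne_zero one_ne_zero
  obtain ⟨U, hU, htU, hsub⟩ := exists_nhds_square <|
    isCompact_univ.eventually_forall_of_forall_eventually
      (P := fun z y => align (H (z.1, y)) (H (z.2, y)) ≠ 0) fun y _ => hnear y
  exact ⟨U, hU, htU, fun s hs s' hs' y => hsub (Set.mk_mem_prod hs hs') y (Set.mem_univ y)⟩

theorem exists_partition_align_ne_zero (H : C(I × Y, RP2)) :
    ∃ (t : ℕ → I) (n : ℕ), t 0 = 0 ∧ t n = 1 ∧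
      ∀ k s y, align (H (min s (t (k + 1)), y)) (H (min s (t k), y)) ≠ 0 := by
  choose U hU hmem hne using exists_isOpen_align_ne_zero H
  obtain ⟨t, ht0, htmono, ⟨n, hn⟩, hsub⟩ := exists_monotone_Icc_subset_open_cover_unitInterval hU
    fun s _ => Set.mem_iUnion.2 ⟨s, hmem s⟩
  refine ⟨t, n, ht0, hn n le_rfl, fun k s y => ?_⟩
  have hle : t k ≤ t (k + 1) := htmono k.le_succ
  rcases le_total s (t k) with hs | hs
  · rw [min_eq_left hs, min_eq_left (hs.trans hle), align_self]
    exact smul_ne_zero two_ne_zero one_ne_zero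
  · obtain ⟨s₀, hs₀⟩ := hsub k
    rw [min_eq_right hs]
    exact hne s₀ _ (hs₀ ⟨le_min hs hle, min_le_right _ _⟩) _ (hs₀ ⟨le_rfl, hle⟩) y

theorem exists_smul_homotopy (H : C(I × Y, RP2)) :
    ∃ K : C(I × Y, UnitQuaternion), (∀ y, K (0, y) = 1) ∧
      (∀ s y, H (s, y) = K (s, y) • H (0, y)) ∧
      ∀ y, (∀ s, H (s, y) = H (0, y)) → ∀ s, K (s, y) = 1 := by
  obtain ⟨t, n, ht0, htn, hstep⟩ := exists_partition_align_ne_zero H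
  let H' (k : ℕ) : C(I × Y, RP2) := H.comp ⟨fun z => (min z.1 (t k), z.2), by fun_prop⟩
  have hind (k : ℕ) : ∃ K : C(I × Y, UnitQuaternion), (∀ y, K (0, y) = 1) ∧
      (∀ s y, H' k (s, y) = K (s, y) • H (0, y)) ∧
      ∀ y, (∀ s, H (s, y) = H (0, y)) → ∀ s, K (s, y) = 1 := by
    induction k with
    | zero => exact ⟨1, fun _ => rfl, fun s y => by simp [H', ht0], fun _ _ _ => rfl⟩
    | succ k ih =>
      obtain ⟨K, hK0, hKH, hK1⟩ := ih
      obtain ⟨L, hL⟩ := exists_smul_of_align_ne_zero (H' k) (H' (k + 1)) fun z => hstep k z.1 z.2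
      refine ⟨L * K, fun y => ?_, fun s y => ?_, fun y hy s => ?_⟩
      · rw [ContinuousMap.mul_apply, hK0, mul_one]
        exact (hL (0, y)).2 (by simp [H'])
      · rw [ContinuousMap.mul_apply, mul_smul, ← hKH, (hL (s, y)).1]
      · rw [ContinuousMap.mul_apply, hK1 y hy, mul_one]
        exact (hL (s, y)).2 ((hy _).trans (hy _).symm)
  obtain ⟨K, hK0, hKH, hK1⟩ := hind n
  have hH' (s : I) (y : Y) : H' n (s, y) = H (s, y) := by
    simp [H', htn, min_eq_left (unitInterval.le_one' (t := s))]
  exact ⟨K, hK0, fun s y => hH' s y ▸ hKH s y, hK1⟩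

end RP2

namespace UnitQuaternion

theorem exists_extension_of_eq_mul_turn {u : UnitVector} {c : ℝ} (G : C(I, UnitQuaternion))
    (hG : G 1 = G 0 * turn u c) :
    ∃ H : C(ℝ, UnitQuaternion), (∀ x : I, H x = G x) ∧ ∀ x, H (x + 1) = H x * turn u c := by
  let P (x : ℝ) : UnitQuaternion := G (Set.projIcc 0 1 zero_le_one x) * turn u (-(c * x))
  have hP : Continuous P := by fun_prop
  have hP01 : P 0 = P 1 := by
    simp only [P, Set.projIcc_left, Set.projIcc_right, mul_zero, neg_zero, turn_zero, mul_one]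
    exact (eq_mul_inv_of_mul_eq hG.symm).trans (by rw [turn_neg]; rfl)
  have hfract : Continuous fun x => P (Int.fract x) :=
    ContinuousOn.comp_fract'' hP.continuousOn hP01
  refine ⟨⟨fun x => P (Int.fract x) * turn u (c * x), hfract.mul (by fun_prop)⟩, fun x => ?_,
    fun x => ?_⟩
  · have hPx : P (Int.fract (x : ℝ)) = P x := by
      rcases x.2.2.eq_or_lt with h | h
      · rw [h, Int.fract_one, hP01]
      · rw [Int.fract_eq_self.2 ⟨x.2.1, h⟩]
    rw [ContinuousMap.coe_mk, hPx]
    simp only [P, Set.projIcc_val, mul_assoc, ← turn_add, neg_add_cancel, turn_zero, mul_one]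
  · simp only [ContinuousMap.coe_mk, Int.fract_add_one, mul_add, mul_one, turn_add, mul_assoc]

theorem exists_path_lift (l : C(I, RP2)) {A : UnitQuaternion} (hA : l 0 = A • rp2BasePoint) :
    ∃ G : C(I, UnitQuaternion), G 0 = A ∧ ∀ s, l s = G s • rp2BasePoint := by
  obtain ⟨K, hK0, hK, -⟩ := RP2.exists_smul_homotopy (l.comp (ContinuousMap.fst (β := Unit)))
  refine ⟨⟨fun s => K (s, ()) * A, by fun_prop⟩, ?_, fun s => ?_⟩
  · simp [hK0]
  · have hs : l s = K (s, ()) • l 0 := hK s ()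
    rw [hs, hA, ← mul_smul]
    rfl

theorem exists_closed_path_lift (l : C(I, RP2)) (hl : l 1 = l 0) {A : UnitQuaternion}
    (hA : l 0 = A • rp2BasePoint) :
    ∃ (κ : Bool) (G : C(I, UnitQuaternion)), G 0 = A ∧ (∀ s, l s = G s • rp2BasePoint) ∧
      G 1 = G 0 * twist κ := by
  obtain ⟨G, hG0, hG⟩ := exists_path_lift l hA
  obtain ⟨κ, γ, hγ⟩ := exists_twist_mul_turn (T := ℝ) (g := .const ℝ (G 0)) (h := .const ℝ (G 1))
    fun _ => by rw [ContinuousMap.const_apply, ContinuousMap.const_apply, ← hG, ← hG, hl]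
  have hγ0 : G 1 = G 0 * twist κ * 𝐞 (γ 0) := hγ 0
  refine ⟨κ, ⟨fun s => G s * 𝐞 (-(γ 0 * s)), by fun_prop⟩, ?_, fun s => ?_, ?_⟩
  · simp [hG0]
  · simp only [ContinuousMap.coe_mk, mul_smul, turn_vecI_smul_basePoint, hG]
  · simp [hγ0, mul_assoc, ← turn_add]

theorem exists_periodic_lift {h : ℝ} (hh : h ≠ 0) (l : C(ℝ, RP2)) (hl : Function.Periodic l h)
    {A : UnitQuaternion} (hA : l 0 = A • rp2BasePoint) :
    ∃ (κ : Bool) (G : C(ℝ, UnitQuaternion)), G 0 = A ∧ (∀ x, l x = G x • rp2BasePoint) ∧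
      ∀ x, G (x + h) = G x * twist κ := by
  obtain ⟨κ, G, hG0, hG, hG1⟩ := exists_closed_path_lift ⟨fun s : I => l (h * s), by fun_prop⟩
    (by simpa using hl 0) (A := A) (by simpa using hA)
  obtain ⟨G', hG', hG'per⟩ := exists_extension_of_eq_mul_turn G hG1
  have hl1 : Function.Periodic (fun x => l (h * x)) 1 := fun x => by
    simp only [mul_add, mul_one, hl (h * x)]
  have hG'1 : Function.Periodic (fun x => G' x • rp2BasePoint) 1 := fun x => by
    simp only [hG'per, mul_smul]
    exact congrArg (G' x • ·) (twist_smul_basePoint κ)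
  have hlift (x : ℝ) : l (h * x) = G' x • rp2BasePoint := by
    have hfract := hG ⟨Int.fract x, Int.fract_nonneg x, (Int.fract_lt_one x).le⟩
    rw [← hG'] at hfract
    have hlx := hl1.sub_zsmul_eq ⌊x⌋ (x := x)
    have hGx := hG'1.sub_zsmul_eq ⌊x⌋ (x := x)
    simp only [zsmul_eq_mul, mul_one, Int.self_sub_floor] at hlx hGx
    rw [← hlx, ← hGx]
    exact hfract
  refine ⟨κ, ⟨fun x => G' (x / h), by fun_prop⟩, ?_, fun x => ?_, fun x => ?_⟩
  · simpa [hG0] using hG' 0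
  · simp only [ContinuousMap.coe_mk, ← hlift, mul_div_cancel₀ _ hh]
  · simp only [ContinuousMap.coe_mk, add_div, div_self hh, hG'per, twist]

end UnitQuaternion

/-! ### The space `M_{p,q}` -/

variable {p q : ℕ}

/-- The strip `[0, 1] × ℝ` as a cover of the cylinder, with period `1` in the second variable. -/
def cylinderProj : C(I × ℝ, I × Circle) :=
  ⟨fun z => (z.1, Circle.exp (2 * Real.pi * z.2)), by fun_prop⟩

theorem cylinderProj_add_one (s : I) (θ : ℝ) : cylinderProj (s, θ + 1) = cylinderProj (s, θ) :=
  Prod.ext rfl <| by simp [cylinderProj, mul_add]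

theorem exists_int_of_cylinderProj_eq {z w : I × ℝ} (h : cylinderProj z = cylinderProj w) :
    ∃ n : ℤ, z = (w.1, w.2 + n) := by
  obtain ⟨n, hn⟩ := Circle.exp_eq_exp.1 (congrArg Prod.snd h)
  have hfst : z.1 = w.1 := congrArg (fun c : I × Circle => c.1) h
  refine ⟨n, Prod.ext hfst (mul_left_cancel₀ Real.two_pi_pos.ne' ?_)⟩
  linear_combination hn

theorem isQuotientMap_cylinderProj : IsQuotientMap cylinderProj := by
  have hexp : IsOpenQuotientMap (Circle.exp : ℝ → Circle) :=
    ⟨Circle.exp_surjective, Circle.exp.continuous,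
      Circle.isCoveringMap_exp.isLocalHomeomorph.isOpenMap⟩
  have hscale : IsOpenQuotientMap fun x : ℝ => 2 * Real.pi * x :=
    (Homeomorph.mulLeft₀ (2 * Real.pi) Real.two_pi_pos.ne').isOpenQuotientMap
  exact (IsOpenQuotientMap.id.prodMap (hexp.comp hscale)).isQuotientMap

theorem mpqRel_cylinderProj_iff {s : I} {θ : ℝ} {b : I × Circle} :
    MpqRel p q (cylinderProj (s, θ)) b ↔
      s = 0 ∧ b = cylinderProj (0, θ + 1 / p) ∨ s = 1 ∧ b = cylinderProj (1, θ + 1 / q) := by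
  have hexp (m : ℕ) : Circle.exp (2 * Real.pi / m) * Circle.exp (2 * Real.pi * θ) =
      Circle.exp (2 * Real.pi * (θ + 1 / m)) := by
    rw [← Circle.exp_add]
    congr 1
    ring
  simp only [MpqRel, cylinderProj, ContinuousMap.coe_mk, hexp, Prod.ext_iff, Subtype.ext_iff,
    Set.Icc.coe_zero, Set.Icc.coe_one]

/-- The strip `[0, 1] × ℝ` as a cover of `M_{p,q}`. -/
def stripProj (p q : ℕ) : C(I × ℝ, Mpq p q) :=
  ContinuousMap.comp ⟨Quot.mk _, continuous_quot_mk⟩ cylinderProj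

theorem stripProj_surjective : Function.Surjective (stripProj p q) :=
  Quot.mk_surjective.comp isQuotientMap_cylinderProj.surjective

theorem stripProj_zero : stripProj p q (0, 0) = mpqBasePoint p q :=
  congrArg (Quot.mk _) (Prod.ext rfl (by simp [cylinderProj]))

instance : CompactSpace (Mpq p q) := Quot.compactSpace

/-- Invariance of a function on the strip under the identifications defining `M_{p,q}`. -/
structure StripInvariant (p q : ℕ) {Z : Type*} (G : I × ℝ → Z) : Prop where
  add_one : ∀ s θ, G (s, θ + 1) = G (s, θ)
  left : ∀ θ, G (0, θ + 1 / p) = G (0, θ)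
  right : ∀ θ, G (1, θ + 1 / q) = G (1, θ)

theorem stripInvariant_stripProj : StripInvariant p q (stripProj p q) where
  add_one s θ := congrArg (Quot.mk _) (cylinderProj_add_one s θ)
  left _ := (Quot.sound (mpqRel_cylinderProj_iff.2 (.inl ⟨rfl, rfl⟩))).symm
  right _ := (Quot.sound (mpqRel_cylinderProj_iff.2 (.inr ⟨rfl, rfl⟩))).symm

theorem StripInvariant.comp_stripProj {Z : Type*} (f : Mpq p q → Z) :
    StripInvariant p q fun z => f (stripProj p q z) where
  add_one s θ := congrArg f (stripInvariant_stripProj.add_one s θ)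
  left θ := congrArg f (stripInvariant_stripProj.left θ)
  right θ := congrArg f (stripInvariant_stripProj.right θ)

theorem StripInvariant.exists_lift {Z : Type*} [TopologicalSpace Z] {G : C(I × ℝ, Z)}
    (hG : StripInvariant p q G) : ∃ F : C(Mpq p q, Z), ∀ z, F (stripProj p q z) = G z := by
  have hfactor : Function.FactorsThrough G cylinderProj := fun z w h => by
    obtain ⟨n, rfl⟩ := exists_int_of_cylinderProj_eq h
    have hper : Function.Periodic (fun θ => G (w.1, θ)) 1 := hG.add_one w.1
    simpa using hper.int_mul n w.2
  let F : C(I × Circle, Z) := isQuotientMap_cylinderProj.lift G hfactor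
  have hF (z) : F (cylinderProj z) = G z :=
    DFunLike.congr_fun (isQuotientMap_cylinderProj.lift_comp G hfactor) z
  have hrel (a b) (h : MpqRel p q a b) : F a = F b := by
    obtain ⟨⟨s, θ⟩, rfl⟩ := isQuotientMap_cylinderProj.surjective a
    rcases mpqRel_cylinderProj_iff.1 h with ⟨rfl, rfl⟩ | ⟨rfl, rfl⟩
    · rw [hF, hF, hG.left]
    · rw [hF, hF, hG.right]
  exact ⟨⟨Quot.lift F hrel, continuous_quot_lift hrel F.continuous⟩, hF⟩

/-- The continuous functions on `M_{p,q}` whose pullback to the strip extends to a `C¹` function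
on the plane. -/
abbrev mpqSmooth (p q : ℕ) : Subalgebra ℝ C(Mpq p q, ℝ) :=
  smoothSubalgebra (fun z : I × ℝ => ((z.1 : ℝ), z.2)) (stripProj p q)

theorem exists_mem_mpqSmooth {Φ : ℝ × ℝ → ℝ} (hΦ : ContDiff ℝ 1 Φ)
    (hinv : StripInvariant p q fun z => Φ ((z.1 : ℝ), z.2)) :
    ∃ φ ∈ mpqSmooth p q, ∀ z, φ (stripProj p q z) = Φ ((z.1 : ℝ), z.2) := by
  obtain ⟨φ, hφ⟩ := StripInvariant.exists_lift
    (G := ⟨fun z => Φ ((z.1 : ℝ), z.2), hΦ.continuous.comp (by fun_prop)⟩) hinv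
  exact ⟨φ, ⟨Φ, hΦ, fun z => (hφ z).symm⟩, hφ⟩

theorem cos_nat_mul_add_one_div {m k : ℕ} (hm : 0 < m) (h : m ∣ k) (θ a : ℝ) :
    Real.cos (2 * Real.pi * (k * (θ + 1 / m) - a)) = Real.cos (2 * Real.pi * (k * θ - a)) := by
  obtain ⟨n, rfl⟩ := h
  have hmm : (m : ℝ) * (1 / m) = 1 := mul_one_div_cancel (Nat.cast_ne_zero.2 hm.ne')
  refine (congrArg Real.cos ?_).trans (Real.cos_add_nat_mul_two_pi _ n)
  push_cast
  linear_combination 2 * Real.pi * n * hmm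

theorem stripInvariant_mul_cos (hp : 0 < p) (hq : 0 < q) {u : ℝ → ℝ} {k : ℕ} (a : ℝ)
    (h0 : u 0 = 0 ∨ p ∣ k) (h1 : u 1 = 0 ∨ q ∣ k) :
    StripInvariant p q fun z => u z.1 * Real.cos (2 * Real.pi * (k * z.2 - a)) where
  add_one s θ := by
    have h := cos_nat_mul_add_one_div one_pos (one_dvd k) θ a
    rw [Nat.cast_one, div_one] at h
    rw [h]
  left θ := by
    rcases h0 with h | h
    · simp [h]
    · rw [cos_nat_mul_add_one_div hp h]
  right θ := by
    rcases h1 with h | h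
    · simp [h]
    · rw [cos_nat_mul_add_one_div hq h]

theorem exists_bump_periodic (hp : 0 < p) (hq : 0 < q) (s : I) :
    ∃ (u : ℝ → ℝ) (k : ℕ), ContDiff ℝ 1 u ∧ (u 0 = 0 ∨ p ∣ k) ∧ (u 1 = 0 ∨ q ∣ k) ∧
      u s ≠ 0 ∧ 0 < k ∧ Function.Periodic (fun θ => stripProj p q (s, θ)) (1 / k) := by
  rcases eq_or_ne s 0 with rfl | hs0
  · exact ⟨fun x => 1 - x, p, by fun_prop, .inr dvd_rfl, .inl (sub_self 1), by simp, hp,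
      stripInvariant_stripProj.left⟩
  rcases eq_or_ne s 1 with rfl | hs1
  · exact ⟨fun x => x, q, by fun_prop, .inl rfl, .inr dvd_rfl, by simp, hq,
      stripInvariant_stripProj.right⟩
  · refine ⟨fun x => x * (1 - x), 1, by fun_prop, .inl (by simp), .inl (by simp), ?_, one_pos, ?_⟩
    · exact mul_ne_zero (fun h => hs0 (Subtype.ext h))
        (sub_ne_zero.2 fun h => hs1 (Subtype.ext h.symm))
    · rw [Nat.cast_one, div_one]
      exact stripInvariant_stripProj.add_one s

theorem mpqSmooth_separatesPoints (hp : 0 < p) (hq : 0 < q) :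
    (mpqSmooth p q).SeparatesPoints := by
  intro x y hxy
  obtain ⟨⟨s, θ⟩, rfl⟩ := stripProj_surjective x
  obtain ⟨⟨s', θ'⟩, rfl⟩ := stripProj_surjective y
  suffices ∃ φ ∈ mpqSmooth p q, φ (stripProj p q (s, θ)) ≠ φ (stripProj p q (s', θ')) by
    obtain ⟨φ, hφ, hne⟩ := this
    exact ⟨φ, ⟨φ, hφ, rfl⟩, hne⟩
  rcases ne_or_eq s s' with hs | rfl
  · obtain ⟨φ, hφ, hφΦ⟩ := exists_mem_mpqSmooth (p := p) (q := q) (Φ := fun z => z.1) contDiff_fst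
      ⟨fun _ _ => rfl, fun _ => rfl, fun _ => rfl⟩
    exact ⟨φ, hφ, by rwa [hφΦ, hφΦ, Ne, ← Subtype.ext_iff]⟩
  obtain ⟨u, k, hu, h0, h1, hus, hk, hper⟩ := exists_bump_periodic hp hq s
  obtain ⟨φ, hφ, hφΦ⟩ := exists_mem_mpqSmooth
    (Φ := fun z => u z.1 * Real.cos (2 * Real.pi * (k * z.2 - k * θ')))
    ((hu.comp contDiff_fst).mul (Real.contDiff_cos.comp (by fun_prop)))
    (stripInvariant_mul_cos hp hq (k * θ') h0 h1)
  refine ⟨φ, hφ, fun h => hxy ?_⟩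
  have hcos : Real.cos (2 * Real.pi * (k * θ - k * θ')) = 1 := by
    simpa [hφΦ, hus] using h
  obtain ⟨n, hn⟩ := (Real.cos_eq_one_iff _).1 hcos
  have hθ : θ = θ' + n * (1 / k) := by
    have hkn : (k : ℝ) * θ = k * θ' + n := mul_left_cancel₀ Real.two_pi_pos.ne' <| by
      linear_combination -hn
    field_simp
    linear_combination hkn
  rw [hθ]
  exact hper.int_mul n θ'

theorem exists_based_nullhomotopy (hp : 0 < p) (hq : 0 < q) (K : C(Mpq p q, UnitQuaternion))
    {m : Mpq p q} (hm : K m = 1) :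
    ∃ H : C(I × Mpq p q, UnitQuaternion), (∀ x, H (0, x) = 1) ∧ (∀ x, H (1, x) = K x) ∧
      ∀ t, H (t, m) = 1 := by
  have hdim : Module.finrank ℝ (ℝ × ℝ) + 1 < Module.finrank ℝ ℍ[ℝ] := by
    rw [Quaternion.finrank_eq_four, Module.finrank_prod, Module.finrank_self]
    norm_num
  obtain ⟨c, ⟨H⟩⟩ := sphereMap_nullhomotopic hdim stripProj_surjective
    (mpqSmooth_separatesPoints hp hq) K
  let L := H.symm
  refine ⟨⟨fun z => (L (z.1, m))⁻¹ * L z, by fun_prop⟩, fun x => ?_, fun x => ?_, fun t => ?_⟩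
  · simp
  · simp [hm]
  · simp

theorem eq_nat_mul_of_map_add_one_div {F : ℝ → ℝ} {m : ℕ} (hm : 0 < m) {c D : ℝ}
    (hc : ∀ x, F (x + 1 / m) = F x + c) (hD : ∀ x, F (x + 1) = F x + D) : D = m * c := by
  have hiter := AddConstMapClass.map_add_nsmul (⟨F, hc⟩ : AddConstMap ℝ ℝ (1 / m) c) 0 m
  have hm1 : m • (1 / m : ℝ) = 1 := by
    rw [nsmul_eq_mul, mul_one_div_cancel (Nat.cast_ne_zero.2 hm.ne')]
  rw [hm1, nsmul_eq_mul] at hiter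
  exact add_left_cancel ((hD 0).symm.trans hiter)

namespace UnitQuaternion

theorem turn_nat_mul (u : UnitVector) (n : ℕ) (x : ℝ) : turn u (n * x) = turn u x ^ n := by
  simpa using iterate_mul_right (turn_add u · x) n 0

theorem turn_half_eq (u v : UnitVector) : turn u (1 / 2) = turn v (1 / 2) := by
  have hangle : 2 * Real.pi * (1 / 2) = Real.pi := by ring
  exact Subtype.ext (by rw [coe_turn, coe_turn, hangle, Real.sin_pi, zero_smul, zero_smul])

theorem twist_sq (κ : Bool) : twist κ ^ 2 = 𝐞 (2 * twistAngle κ) := by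
  rw [twist, ← turn_nat_mul, Nat.cast_ofNat]
  cases κ
  · simp [twistAngle]
  · have hangle : 2 * twistAngle true = 1 / 2 := by norm_num [twistAngle]
    rw [hangle, turn_half_eq]

theorem twist_pow_of_even {m : ℕ} (hm : Even m) (κ : Bool) :
    twist κ ^ m = 𝐞 (m * twistAngle κ) := by
  obtain ⟨n, rfl⟩ := even_iff_exists_two_mul.1 hm
  rw [pow_mul, twist_sq, ← turn_nat_mul]
  congr 1
  push_cast
  ring

theorem twist_pow_mem_circleSubgroup_iff {m : ℕ} (hm : Odd m) {κ : Bool} :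
    twist κ ^ m ∈ circleSubgroup ↔ κ = false := by
  obtain ⟨n, rfl⟩ := hm
  rw [pow_succ, twist_pow_of_even (even_two_mul n),
    Subgroup.mul_mem_cancel_left _ (turn_vecI_mem_circleSubgroup _), twist_mem_circleSubgroup_iff]

theorem inv_twist_mul_turn_mul_twist_mem (κ : Bool) (x : ℝ) :
    (twist κ)⁻¹ * (𝐞 x * twist κ) ∈ circleSubgroup := by
  cases κ
  · simpa using turn_vecI_mem_circleSubgroup x
  · rw [← neg_neg x, ← twist_true_mul_turn, inv_mul_cancel_left]
    exact turn_vecI_mem_circleSubgroup _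

theorem exists_turn_equivariant (hq : 0 < q) (hqe : Even q) {g : C(ℝ, UnitQuaternion)}
    (hg : Function.Periodic (fun θ => g θ • rp2BasePoint) (1 / q)) :
    ∃ (κ : Bool) (γ : C(ℝ, ℝ)),
      (∀ θ, g (θ + 1 / q) * 𝐞 (γ (θ + 1 / q)) = g θ * 𝐞 (γ θ) * twist κ) ∧
      ∀ θ, g (θ + 1) * 𝐞 (γ (θ + 1)) = g θ * 𝐞 (γ θ + q * twistAngle κ) := by
  have hq' : (q : ℝ) ≠ 0 := Nat.cast_ne_zero.2 hq.ne'
  obtain ⟨κ, G, hG0, hG, hGq⟩ := exists_periodic_lift (one_div_ne_zero hq')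
    ⟨fun θ => g θ • rp2BasePoint, by fun_prop⟩ hg rfl
  obtain ⟨γ, hγ⟩ := exists_mul_turn hG hG0.symm
  refine ⟨κ, γ, fun θ => by rw [← hγ, ← hγ, hGq], fun θ => ?_⟩
  have hiter := iterate_mul_right hGq q θ
  rw [mul_one_div_cancel hq', twist_pow_of_even hqe] at hiter
  rw [← hγ, hiter, hγ, turn_add, mul_assoc]

theorem defect_of_twist_mul_turn (hq : 0 < q) (hqe : Even q) {κ κ' : Bool} {δ : C(ℝ, ℝ)} {D : ℝ}
    (hδ : ∀ θ, twist κ * 𝐞 (δ (θ + 1 / q)) = 𝐞 (δ θ) * twist κ')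
    (hD : ∀ θ, δ (θ + 1) = δ θ + D) :
    κ = κ' ∧ ∃ l : ℤ, D = q * l ∧ (κ = true → l = 0) := by
  obtain rfl : κ = κ' := by
    refine twist_index_unique (g := twist κ * 𝐞 (δ (0 + 1 / q))) ?_ ?_
    · simpa using turn_vecI_mem_circleSubgroup _
    · rw [hδ]
      exact inv_twist_mul_turn_mul_twist_mem κ' _
  refine ⟨rfl, ?_⟩
  cases κ
  · obtain ⟨l, hl⟩ := exists_int_eq_add_of_turn_eq (F := fun θ => δ (θ + 1 / q)) (by fun_prop)
      δ.continuous (by simpa using hδ)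
    exact ⟨l, eq_nat_mul_of_map_add_one_div hq hl hD, nofun⟩
  · obtain ⟨l, hl⟩ := exists_int_eq_add_of_turn_eq (F := fun θ => -δ (θ + 1 / q)) (by fun_prop)
      δ.continuous fun θ => mul_right_cancel ((twist_true_mul_turn _).symm.trans (hδ θ))
    obtain ⟨m, rfl⟩ := even_iff_exists_two_mul.1 hqe
    have hm : 0 < m := by lia
    have hhalf : (1 / m : ℝ) = 1 / (2 * m : ℕ) + 1 / (2 * m : ℕ) := by
      push_cast
      field_simp
      norm_num
    refine ⟨0, ?_, fun _ => rfl⟩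
    rw [eq_nat_mul_of_map_add_one_div hm (c := 0) (fun θ => ?_) hD, Int.cast_zero, mul_zero,
      mul_zero]
    rw [hhalf, ← add_assoc]
    linarith [hl θ, hl (θ + 1 / (2 * m : ℕ))]

end UnitQuaternion

/-! ### The type of a based map -/

open UnitQuaternion

/-- The slope of the exponential by which a lift of type `(κ, n)` is untwisted at the right end. -/
def typeSlope (q : ℕ) (κ : Bool) (n : ℤ) : ℝ := n + q * twistAngle κ

/-- `G` is a lift to the unit quaternions of type `(κ, n)`: on the right end of the strip,
multiplication by an exponential of slope `typeSlope q κ n` turns the deck transformation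
`θ ↦ θ + 1 / q` into right multiplication by `twist κ`. -/
structure IsTypeLift (p q : ℕ) (κ : Bool) (n : ℤ) (G : C(I × ℝ, UnitQuaternion)) : Prop where
  map_zero : G (0, 0) = 1
  add_one : ∀ s θ, G (s, θ + 1) = G (s, θ)
  left : ∀ θ, G (0, θ + 1 / p) = G (0, θ)
  right : ∀ θ, G (1, θ + 1 / q) * 𝐞 (typeSlope q κ n * (θ + 1 / q)) =
    G (1, θ) * 𝐞 (typeSlope q κ n * θ) * twist κ

/-- The map `f` is the orbit map through the base point of a lift of type `(κ, n)`; the pair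
`(κ, n)` is the invariant that classifies based maps up to homotopy. -/
def HasType (f : C(Mpq p q, RP2)) (κ : Bool) (n : ℤ) : Prop :=
  ∃ G, IsTypeLift p q κ n G ∧ ∀ z, f (stripProj p q z) = G z • rp2BasePoint

theorem HasType.map_basePoint {f : C(Mpq p q, RP2)} {κ : Bool} {n : ℤ} (hf : HasType f κ n) :
    f (mpqBasePoint p q) = rp2BasePoint := by
  obtain ⟨G, hG, hfG⟩ := hf
  rw [← stripProj_zero, hfG, hG.map_zero, one_smul]

theorem homotopicRel_of_smul (hp : 0 < p) (hq : 0 < q) {f f' : C(Mpq p q, RP2)} {m : Mpq p q}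
    {K : C(Mpq p q, UnitQuaternion)} (hm : K m = 1) (hK : ∀ x, f' x = K x • f x) :
    ContinuousMap.HomotopicRel f f' {m} := by
  obtain ⟨H, H0, H1, Hm⟩ := exists_based_nullhomotopy hp hq K hm
  refine ⟨⟨⟨⟨fun z => H z • f z.2, by fun_prop⟩, fun x => ?_, fun x => ?_⟩, fun t x hx => ?_⟩⟩
  · simp [H0]
  · simp [H1, hK]
  · obtain rfl := Set.mem_singleton_iff.1 hx
    simp [Hm]

theorem IsTypeLift.stripInvariant_mul_inv {κ : Bool} {n : ℤ} {G G' : C(I × ℝ, UnitQuaternion)}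
    (hG : IsTypeLift p q κ n G) (hG' : IsTypeLift p q κ n G') :
    StripInvariant p q (G' * G⁻¹) where
  add_one s θ := by
    simp only [ContinuousMap.mul_apply, ContinuousMap.inv_apply, hG.add_one, hG'.add_one]
  left θ := by simp only [ContinuousMap.mul_apply, ContinuousMap.inv_apply, hG.left, hG'.left]
  right θ := by
    simp only [ContinuousMap.mul_apply, ContinuousMap.inv_apply,
      eq_mul_inv_of_mul_eq (hG.right θ), eq_mul_inv_of_mul_eq (hG'.right θ)]
    group

theorem HasType.homotopicRel (hp : 0 < p) (hq : 0 < q) {f f' : C(Mpq p q, RP2)} {κ : Bool} {n : ℤ}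
    (hf : HasType f κ n) (hf' : HasType f' κ n) :
    ContinuousMap.HomotopicRel f f' {mpqBasePoint p q} := by
  obtain ⟨G, hG, hfG⟩ := hf
  obtain ⟨G', hG', hfG'⟩ := hf'
  obtain ⟨K, hK⟩ := StripInvariant.exists_lift (G := G' * G⁻¹) (hG.stripInvariant_mul_inv hG')
  have hm : K (mpqBasePoint p q) = 1 := by
    simp [← stripProj_zero, hK, hG.map_zero, hG'.map_zero]
  refine homotopicRel_of_smul hp hq hm fun x => ?_
  obtain ⟨z, rfl⟩ := stripProj_surjective x
  simp [hK, hfG, hfG', mul_smul]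

theorem HasType.congr_homotopicRel {f f' : C(Mpq p q, RP2)} {κ : Bool} {n : ℤ}
    (hf : HasType f κ n) (h : ContinuousMap.HomotopicRel f f' {mpqBasePoint p q}) :
    HasType f' κ n := by
  obtain ⟨G, hG, hfG⟩ := hf
  obtain ⟨H⟩ := h
  obtain ⟨K, -, hK, hKm⟩ := RP2.exists_smul_homotopy H.toContinuousMap
  have hm : K (1, mpqBasePoint p q) = 1 :=
    hKm _ (fun s => (H.eq_fst s rfl).trans (H.eq_fst 0 rfl).symm) 1
  have hf' (x) : f' x = K (1, x) • f x := by
    simpa using hK 1 x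
  have hK1 : StripInvariant p q fun z => K (1, stripProj p q z) :=
    .comp_stripProj fun x => K (1, x)
  refine ⟨⟨fun z => K (1, stripProj p q z) * G z, by fun_prop⟩, ⟨?_, fun s θ => ?_, fun θ => ?_,
    fun θ => ?_⟩, fun z => ?_⟩
  · simp [stripProj_zero, hm, hG.map_zero]
  · exact congrArg₂ (· * ·) (hK1.add_one s θ) (hG.add_one s θ)
  · exact congrArg₂ (· * ·) (hK1.left θ) (hG.left θ)
  · change K (1, stripProj p q (1, θ + 1 / q)) * _ * _ = K (1, stripProj p q (1, θ)) * _ * _ * _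
    rw [hK1.right, mul_assoc, hG.right]
    simp only [mul_assoc]
  · exact (hf' _).trans (by rw [hfG, ← mul_smul]; rfl)

theorem HasType.add_left_mul (hp : 0 < p) {f : C(Mpq p q, RP2)} {κ : Bool} {n : ℤ}
    (hf : HasType f κ n) (k : ℤ) : HasType f κ (n + p * k) := by
  obtain ⟨G, hG, hfG⟩ := hf
  have hp' : (p : ℝ) ≠ 0 := Nat.cast_ne_zero.2 hp.ne'
  have hslope (x : ℝ) :
      𝐞 (-(p * k) * x) * 𝐞 (typeSlope q κ (n + p * k) * x) = 𝐞 (typeSlope q κ n * x) := by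
    rw [← turn_add]
    congr 1
    push_cast [typeSlope]
    ring
  refine ⟨⟨fun z => G z * 𝐞 (-(p * k) * z.2), by fun_prop⟩, ⟨?_, fun s θ => ?_, fun θ => ?_,
    fun θ => ?_⟩, fun z => ?_⟩
  · simp [hG.map_zero]
  · refine congrArg₂ (· * ·) (hG.add_one s θ) (turn_eq_turn_iff.2 ⟨-(p * k), ?_⟩)
    push_cast
    ring
  · refine congrArg₂ (· * ·) (hG.left θ) (turn_eq_turn_iff.2 ⟨-k, ?_⟩)
    push_cast
    field_simp
    ring
  · simp only [ContinuousMap.coe_mk, mul_assoc (G _) (𝐞 _) (𝐞 _), hslope, hG.right]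
  · simp [hfG, mul_smul, turn_vecI_smul_basePoint]

theorem HasType.add_right_mul (hq : 0 < q) {f : C(Mpq p q, RP2)} {n : ℤ}
    (hf : HasType f false n) (l : ℤ) : HasType f false (n + q * l) := by
  obtain ⟨G, hG, hfG⟩ := hf
  have hq' : (q : ℝ) ≠ 0 := Nat.cast_ne_zero.2 hq.ne'
  have hslope (x : ℝ) : 𝐞 (typeSlope q false (n + q * l) * x) =
      𝐞 (typeSlope q false n * x) * 𝐞 (q * l * x) := by
    rw [← turn_add]
    congr 1
    push_cast [typeSlope]
    ring
  have hper (θ : ℝ) : 𝐞 (q * l * (θ + 1 / q)) = 𝐞 (q * l * θ) :=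
    turn_eq_turn_iff.2 ⟨l, by field_simp⟩
  refine ⟨G, ⟨hG.map_zero, hG.add_one, hG.left, fun θ => ?_⟩, hfG⟩
  rw [hslope, hslope, hper, ← mul_assoc, hG.right, twist_false, mul_one, mul_one, mul_assoc]

theorem HasType.unique (hp : 0 < p) (hq : 0 < q) (hqe : Even q) {f : C(Mpq p q, RP2)}
    {κ κ' : Bool} {n n' : ℤ} (hf : HasType f κ n) (hf' : HasType f κ' n') :
    κ = κ' ∧ ∃ k l : ℤ, n' = n + p * k + q * l ∧ (κ = true → l = 0) := by
  obtain ⟨G, hG, hfG⟩ := hf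
  obtain ⟨G', hG', hfG'⟩ := hf'
  obtain ⟨γ, hγ⟩ := exists_mul_turn_strip (fun z => (hfG z).symm.trans (hfG' z))
    (z₀ := (0, 0)) (hG.map_zero.trans hG'.map_zero.symm)
  have hperiod {z w} (h : G z = G w) (h' : G' z = G' w) : 𝐞 (γ z) = 𝐞 (γ w) :=
    mul_left_cancel (a := G w) (by rw [← hγ w, ← h', hγ z, h])
  obtain ⟨d, hd⟩ := exists_int_eq_add_of_turn_eq (F := fun z : I × ℝ => γ (z.1, z.2 + 1))
    (by fun_prop) γ.continuous fun z => hperiod (hG.add_one _ _) (hG'.add_one _ _)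
  obtain ⟨k, hk⟩ := exists_int_eq_add_of_turn_eq (F := fun θ : ℝ => γ (0, θ + 1 / p))
    (F' := fun θ => γ (0, θ)) (by fun_prop) (by fun_prop)
    fun θ => hperiod (hG.left θ) (hG'.left θ)
  have hdk : (d : ℝ) = p * k := eq_nat_mul_of_map_add_one_div hp (F := fun θ => γ (0, θ)) hk
    fun θ => hd (0, θ)
  let a := typeSlope q κ n
  let a' := typeSlope q κ' n'
  let δ : C(ℝ, ℝ) := ⟨fun θ => γ (1, θ) + (a' - a) * θ, by fun_prop⟩
  have hGδ (θ) : G' (1, θ) * 𝐞 (a' * θ) = G (1, θ) * 𝐞 (a * θ) * 𝐞 (δ θ) := by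
    rw [hγ, mul_assoc, mul_assoc, ← turn_add, ← turn_add]
    congr 2
    change _ = a * θ + (γ (1, θ) + (a' - a) * θ)
    ring
  have hδ (θ) : twist κ * 𝐞 (δ (θ + 1 / q)) = 𝐞 (δ θ) * twist κ' := by
    apply mul_left_cancel (a := G (1, θ) * 𝐞 (a * θ))
    rw [← mul_assoc, ← hG.right, ← hGδ, hG'.right, hGδ, mul_assoc]
  obtain ⟨rfl, l, hl, hlκ⟩ := defect_of_twist_mul_turn hq hqe hδ (D := d + (a' - a)) fun θ => by
    change γ (1, θ + 1) + (a' - a) * (θ + 1) = γ (1, θ) + (a' - a) * θ + _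
    linear_combination hd (1, θ)
  refine ⟨rfl, -k, l, ?_, hlκ⟩
  have hn : (n' : ℝ) = n + p * -k + q * l := by
    linear_combination (norm := (simp only [a, a', typeSlope]; ring)) hl - hdk
  exact_mod_cast hn

theorem exists_strip_lift (hp : 0 < p) {f : C(Mpq p q, RP2)}
    (hf : f (mpqBasePoint p q) = rp2BasePoint) :
    ∃ (ν : Bool) (G : C(I × ℝ, UnitQuaternion)), G (0, 0) = 1 ∧
      (∀ z, f (stripProj p q z) = G z • rp2BasePoint) ∧
      (∀ θ, G (0, θ + 1 / p) = G (0, θ) * twist ν) ∧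
      ∀ s θ, G (s, θ + 1) = G (s, θ) * twist ν ^ p := by
  have hp' : (p : ℝ) ≠ 0 := Nat.cast_ne_zero.2 hp.ne'
  have hfinv : StripInvariant p q fun z => f (stripProj p q z) := .comp_stripProj f
  obtain ⟨ν, G₀, hG₀, hfG₀, hν⟩ := exists_periodic_lift (one_div_ne_zero hp')
    ⟨fun θ => f (stripProj p q (0, θ)), by fun_prop⟩ hfinv.left
    (A := 1) (by simp [stripProj_zero, hf])
  obtain ⟨K, hK0, hK, -⟩ :=
    RP2.exists_smul_homotopy (f.comp (⟨Quot.mk _, continuous_quot_mk⟩ : C(I × Circle, Mpq p q)))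
  have hνp (θ) : G₀ (θ + 1) = G₀ θ * twist ν ^ p := by
    have hiter := iterate_mul_right hν p θ
    rwa [mul_one_div_cancel hp'] at hiter
  let G : C(I × ℝ, UnitQuaternion) := ⟨fun z => K (cylinderProj z) * G₀ z.2, by fun_prop⟩
  have hG0 (θ) : G (0, θ) = G₀ θ := (congrArg (· * G₀ θ) (hK0 _)).trans (one_mul _)
  refine ⟨ν, G, by rw [hG0, hG₀], fun ⟨s, θ⟩ => ?_, fun θ => by rw [hG0, hG0, hν], fun s θ => ?_⟩
  · calc f (stripProj p q (s, θ)) = K (cylinderProj (s, θ)) • f (stripProj p q (0, θ)) := hK s _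
      _ = K (cylinderProj (s, θ)) • G₀ θ • rp2BasePoint := congrArg _ (hfG₀ θ)
      _ = G (s, θ) • rp2BasePoint := (mul_smul _ _ _).symm
  · change K (cylinderProj (s, θ + 1)) * G₀ (θ + 1) = K (cylinderProj (s, θ)) * G₀ θ * _
    rw [cylinderProj_add_one, hνp, mul_assoc]

theorem exists_hasType (hq : 0 < q) (hpo : Odd p) (hqe : Even q)
    {f : C(Mpq p q, RP2)} (hf : f (mpqBasePoint p q) = rp2BasePoint) :
    ∃ κ n, HasType f κ n := by
  obtain ⟨ν, G, hG₀, hfG, hGp, hG1⟩ := exists_strip_lift hpo.pos hf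
  obtain ⟨κ, γ, hγq, hγ1⟩ := exists_turn_equivariant hq hqe
    (g := ⟨fun θ => G (1, θ), by fun_prop⟩) fun θ => by
      simpa [hfG] using (StripInvariant.comp_stripProj f).right θ
  simp only [ContinuousMap.coe_mk, hG1, mul_assoc, mul_right_inj] at hγ1
  obtain rfl : ν = false := (twist_pow_mem_circleSubgroup_iff hpo).1 <| by
    rw [eq_mul_inv_of_mul_eq (hγ1 0)]
    exact mul_mem (turn_vecI_mem_circleSubgroup _) (inv_mem (turn_vecI_mem_circleSubgroup _))
  simp only [twist_false, one_pow, one_mul, mul_one] at hγ1 hGp hG1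
  obtain ⟨n, hn⟩ := exists_int_eq_add_of_turn_eq (F := fun θ => γ (θ + 1))
    (F' := fun θ => γ θ + q * twistAngle κ) (by fun_prop) (by fun_prop) hγ1
  let c := typeSlope q κ n
  have hend (θ) : G (1, θ) * 𝐞 (γ θ - c * θ) * 𝐞 (c * θ) = G (1, θ) * 𝐞 (γ θ) := by
    rw [mul_assoc, ← turn_add, sub_add_cancel]
  refine ⟨κ, n, ⟨fun z => G z * 𝐞 (z.1 * (γ z.2 - c * z.2)), by fun_prop⟩,
    ⟨?_, fun s θ => ?_, fun θ => ?_, fun θ => ?_⟩, fun z => ?_⟩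
  · simp [hG₀]
  · have hper : γ (θ + 1) - c * (θ + 1) = γ θ - c * θ := by
      linear_combination (norm := (simp only [c, typeSlope]; ring)) hn θ
    simp only [ContinuousMap.coe_mk, hG1, hper]
  · simp only [ContinuousMap.coe_mk, hGp, Set.Icc.coe_zero, zero_mul]
  · simp only [ContinuousMap.coe_mk, Set.Icc.coe_one, one_mul]
    rw [hend, hend]
    exact hγq θ
  · simp [hfG, mul_smul, turn_vecI_smul_basePoint]

/-- A loop of unit quaternions whose product with the exponential of slope `typeSlope q κ n`
rotates uniformly about `j` by `twist κ` in time `1 / q`. -/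
def typeLoop (q : ℕ) (κ : Bool) (n : ℤ) (θ : ℝ) : UnitQuaternion :=
  turn vecJ (q * twistAngle κ * θ) * 𝐞 (-(typeSlope q κ n * θ))

theorem typeLoop_mul_turn (κ : Bool) (n : ℤ) (θ : ℝ) :
    typeLoop q κ n θ * 𝐞 (typeSlope q κ n * θ) = turn vecJ (q * twistAngle κ * θ) := by
  rw [typeLoop, mul_assoc, ← turn_add, neg_add_cancel, turn_zero, mul_one]

theorem typeLoop_add_one (hqe : Even q) (κ : Bool) (n : ℤ) (θ : ℝ) :
    typeLoop q κ n (θ + 1) = typeLoop q κ n θ := by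
  rw [typeLoop, typeLoop, mul_add, turn_add, mul_one, turn_nat_mul, ← twist,
    twist_pow_of_even hqe, mul_assoc, ← turn_add]
  refine congrArg _ (turn_eq_turn_iff.2 ⟨-n, ?_⟩)
  push_cast [typeSlope]
  ring

theorem typeLoop_add_one_div (hq : 0 < q) (κ : Bool) (n : ℤ) (θ : ℝ) :
    typeLoop q κ n (θ + 1 / q) * 𝐞 (typeSlope q κ n * (θ + 1 / q)) =
      typeLoop q κ n θ * 𝐞 (typeSlope q κ n * θ) * twist κ := by
  have hq' : (q : ℝ) ≠ 0 := Nat.cast_ne_zero.2 hq.ne'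
  rw [typeLoop_mul_turn, typeLoop_mul_turn, twist, ← turn_add]
  congr 1
  field_simp

theorem contDiff_typeLoop (κ : Bool) (n : ℤ) :
    ContDiff ℝ 1 fun θ => (typeLoop q κ n θ : ℍ[ℝ]) :=
  ((contDiff_turn vecJ).comp (by fun_prop)).mul ((contDiff_turn vecI).comp (by fun_prop))

/-- The cone on a `C¹` loop misses a direction of `ℍ`, so the straight segments from a vector in
that direction avoid the origin. -/
theorem exists_strip_of_loop {g : C(ℝ, UnitQuaternion)} (hg : ContDiff ℝ 1 fun θ => (g θ : ℍ[ℝ]))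
    (hper : Function.Periodic g 1) :
    ∃ (a : UnitQuaternion) (G : C(I × ℝ, UnitQuaternion)), (∀ θ, G (0, θ) = 1) ∧
      (∀ θ, G (1, θ) = a * g θ) ∧ ∀ s θ, G (s, θ + 1) = G (s, θ) := by
  obtain ⟨A, hA⟩ := exists_forall_smul_ne
    (by rw [Module.finrank_self, Quaternion.finrank_eq_four]; norm_num) hg
  let L : C(I × ℝ, ℍ[ℝ]) := ⟨fun z => AffineMap.lineMap A (g z.2 : ℍ[ℝ]) (z.1 : ℝ), by
    simp only [AffineMap.lineMap_apply_module]
    fun_prop⟩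
  have hL (z) : L z ≠ 0 := by
    change AffineMap.lineMap A (g z.2 : ℍ[ℝ]) (z.1 : ℝ) ≠ 0
    rw [← AffineMap.lineMap_apply_one_sub]
    exact lineMap_ne_zero_of_forall_ne_smul (ne_zero_of_mem_unit_sphere _) (fun c => hA c z.2) _
  let G : C(I × ℝ, UnitQuaternion) := toUnitSphere L hL
  have hG0 (θ) : G (0, θ) = G (0, 0) := Subtype.ext <| by
    simp [G, coe_toUnitSphere, L]
  have hG1 (θ) : G (1, θ) = g θ := toUnitSphere_apply_eq (AffineMap.lineMap_apply_one _ _)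
  refine ⟨(G (0, 0))⁻¹, ⟨fun z => (G (0, 0))⁻¹ * G z, by fun_prop⟩, fun θ => ?_, fun θ => ?_,
    fun s θ => congrArg ((G (0, 0))⁻¹ * ·) <| Subtype.ext ?_⟩
  · simp [hG0 θ]
  · simp [hG1]
  · simp [G, coe_toUnitSphere, L, hper θ]

theorem exists_map_hasType (hq : 0 < q) (hqe : Even q) (κ : Bool) (n : ℤ) :
    ∃ f : C(Mpq p q, RP2), HasType f κ n := by
  have hloop := contDiff_typeLoop (q := q) κ n
  obtain ⟨a, G, hG0, hG1, hGper⟩ := exists_strip_of_loop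
    (g := ⟨typeLoop q κ n, hloop.continuous.subtype_mk _⟩) hloop (typeLoop_add_one hqe κ n)
  replace hG1 (θ) : G (1, θ) = a * typeLoop q κ n θ := hG1 θ
  have hright (θ) : G (1, θ + 1 / q) * 𝐞 (typeSlope q κ n * (θ + 1 / q)) =
      G (1, θ) * 𝐞 (typeSlope q κ n * θ) * twist κ := by
    simp only [hG1, mul_assoc a, typeLoop_add_one_div hq]
  have hinv : StripInvariant p q fun z => G z • rp2BasePoint :=
    { add_one s θ := by rw [hGper]
      left θ := by rw [hG0, hG0]
      right θ := by
        simpa only [mul_smul, turn_vecI_smul_basePoint, twist_smul_basePoint] using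
          congrArg (· • rp2BasePoint) (hright θ) }
  obtain ⟨f, hf⟩ := StripInvariant.exists_lift
    (G := ⟨fun z => G z • rp2BasePoint, by fun_prop⟩) hinv
  exact ⟨f, G, ⟨hG0 0, hGper, fun θ => by rw [hG0, hG0], hright⟩, hf⟩

/-- The homotopy invariant of a map of type `(κ, n)`. -/
def typeClass (p q : ℕ) (κ : Bool) (n : ℤ) : ZMod (Nat.gcd p q) ⊕ ZMod p :=
  if κ then .inr n else .inl n

theorem typeClass_surjective :
    Function.Surjective fun x : Bool × ℤ => typeClass p q x.1 x.2 := by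
  rintro (x | x)
  · obtain ⟨n, rfl⟩ := ZMod.intCast_surjective x
    exact ⟨(false, n), rfl⟩
  · obtain ⟨n, rfl⟩ := ZMod.intCast_surjective x
    exact ⟨(true, n), rfl⟩

theorem HasType.typeClass_eq (hp : 0 < p) (hq : 0 < q) (hqe : Even q) {f : C(Mpq p q, RP2)}
    {κ κ' : Bool} {n n' : ℤ} (hf : HasType f κ n) (hf' : HasType f κ' n') :
    typeClass p q κ n = typeClass p q κ' n' := by
  obtain ⟨rfl, k, l, rfl, hl⟩ := hf.unique hp hq hqe hf'
  cases κ
  · refine congrArg Sum.inl ((ZMod.intCast_eq_intCast_iff_dvd_sub _ _ _).2 ?_)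
    rw [add_assoc, add_sub_cancel_left]
    exact dvd_add (Dvd.dvd.mul_right (Int.gcd_dvd_left p q) k)
      (Dvd.dvd.mul_right (Int.gcd_dvd_right p q) l)
  · simp [typeClass, hl rfl]

theorem HasType.of_typeClass_eq (hp : 0 < p) (hq : 0 < q) {f : C(Mpq p q, RP2)} {κ κ' : Bool}
    {n n' : ℤ} (hf : HasType f κ n) (h : typeClass p q κ n = typeClass p q κ' n') :
    HasType f κ' n' := by
  cases κ <;> cases κ' <;> simp only [typeClass, if_true, if_false, Bool.false_eq_true,
    Sum.inl.injEq, Sum.inr.injEq, reduceCtorEq, ZMod.intCast_eq_intCast_iff_dvd_sub] at h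
  · obtain ⟨k, l, hkl⟩ := (gcd_dvd_iff_exists (p : ℤ) q (z := n' - n)).1
      (by rwa [← Int.coe_gcd, Int.gcd_natCast_natCast])
    have := (hf.add_left_mul hp k).add_right_mul hq l
    rwa [add_assoc, ← hkl, add_sub_cancel] at this
  · obtain ⟨k, hk⟩ := h
    simpa [← hk] using hf.add_left_mul hp k

theorem homotopicRel_iff_typeClass_eq (hp : 0 < p) (hq : 0 < q) (hqe : Even q)
    {f f' : C(Mpq p q, RP2)} {κ κ' : Bool} {n n' : ℤ} (hf : HasType f κ n)
    (hf' : HasType f' κ' n') :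
    ContinuousMap.HomotopicRel f f' {mpqBasePoint p q} ↔
      typeClass p q κ n = typeClass p q κ' n' :=
  ⟨fun h => (hf.congr_homotopicRel h).typeClass_eq hp hq hqe hf',
    fun h => (hf.of_typeClass_eq hp hq h).homotopicRel hp hq hf'⟩

theorem basedHomotopyClass_mk_eq_iff {M X : Type*} [TopologicalSpace M] [TopologicalSpace X]
    {m₀ : M} {x₀ : X} {f g : {f : C(M, X) // f m₀ = x₀}} :
    (Quot.mk _ f : BasedHomotopyClasses M X m₀ x₀) = Quot.mk _ g ↔
      ContinuousMap.HomotopicRel f.1 g.1 {m₀} :=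
  (ContinuousMap.HomotopicRel.equivalence.comap Subtype.val).quot_mk_eq_iff f g

end

/-- For `p` a positive odd integer and `q` a positive even integer with `r = gcd(p, q)`,
the set `[M_{p,q}, ℝP²]₀` of based homotopy classes is in bijection with `ℤ/r ⊔ ℤ/p`. -/
theorem basedHomotopyClasses_Mpq_RP2_odd_even (p q : ℕ)
    (hp : 0 < p) (hq : 0 < q) (hpo : Odd p) (hqe : Even q) :
    Nonempty (BasedHomotopyClasses (Mpq p q) RP2 (mpqBasePoint p q) rp2BasePoint ≃
      (ZMod (Nat.gcd p q) ⊕ ZMod p)) := by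
  choose model hmodel using exists_map_hasType (p := p) hq hqe
  let modelClass (x : Bool × ℤ) :
      BasedHomotopyClasses (Mpq p q) RP2 (mpqBasePoint p q) rp2BasePoint :=
    Quot.mk _ ⟨model x.1 x.2, (hmodel x.1 x.2).map_basePoint⟩
  have hsurj : Function.Surjective modelClass := by
    rintro ⟨f, hf⟩
    obtain ⟨κ, n, hfκ⟩ := exists_hasType hq hpo hqe hf
    exact ⟨(κ, n), Quot.sound ((hmodel κ n).homotopicRel hp hq hfκ)⟩
  exact nonempty_equiv_of_surjective hsurj typeClass_surjective fun x y =>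
    basedHomotopyClass_mk_eq_iff.trans
      (homotopicRel_iff_typeClass_eq hp hq hqe (hmodel _ _) (hmodel _ _))
end

section
/- Let (∂ : H → G) and (∂' : H' → G') be crossed modules. Both based homotopy and free homotopy are equivalence relations on the set of crossed module homomorphisms from ∂ to ∂': each relation is reflexive, symmetric, and transitive. -/
/-- A crossed module: a group homomorphism `∂ : H → G` together with an action of `G` on
`H` by automorphisms such that `∂(ᵍh) = g ∂(h) g⁻¹` and `^{∂h}h' = h h' h⁻¹`. -/
structure CrossedModule (G H : Type*) [Group G] [Group H] where
  /-- The action of `G` on `H` by automorphisms. -/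
  act : G →* MulAut H
  /-- The boundary homomorphism `∂ : H → G`. -/
  bdry : H →* G
  bdry_act : ∀ (g : G) (h : H), bdry (act g h) = g * bdry h * g⁻¹
  peiffer : ∀ h h' : H, act (bdry h) h' = h * h' * h⁻¹

/-- A homomorphism of crossed modules: a pair of equivariant group homomorphisms commuting
with the boundary maps. -/
structure CrossedModuleHom {G H G' H' : Type*} [Group G] [Group H] [Group G'] [Group H']
    (𝒳 : CrossedModule G H) (𝒴 : CrossedModule G' H') where
  /-- The homomorphism `φ₁ : G → G'`. -/
  φ₁ : G →* G'
  /-- The homomorphism `φ₂ : H → H'`. -/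
  φ₂ : H →* H'
  equivariant : ∀ (g : G) (h : H), φ₂ (𝒳.act g h) = 𝒴.act (φ₁ g) (φ₂ h)
  comm : ∀ h : H, 𝒴.bdry (φ₂ h) = φ₁ (𝒳.bdry h)

/-- `(θ, γ)` is a free homotopy from `φ` to `ψ`. -/
def IsFreeHomotopy {G H G' H' : Type*} [Group G] [Group H] [Group G'] [Group H']
    {𝒳 : CrossedModule G H} {𝒴 : CrossedModule G' H'}
    (φ ψ : CrossedModuleHom 𝒳 𝒴) (θ : G → H') (γ : G') : Prop :=
  (∀ g g' : G, θ (g * g') = θ g * 𝒴.act (γ * ψ.φ₁ g * γ⁻¹) (θ g')) ∧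
  (∀ g : G, 𝒴.bdry (θ g) = φ.φ₁ g * γ * (ψ.φ₁ g)⁻¹ * γ⁻¹) ∧
  (∀ h : H, θ (𝒳.bdry h) = φ.φ₂ h * (𝒴.act γ (ψ.φ₂ h))⁻¹)


/-- Two crossed module homomorphisms are freely homotopic if some free homotopy `(θ, γ)`
connects them. -/
def FreeHomotopic {G H G' H' : Type*} [Group G] [Group H] [Group G'] [Group H']
    {𝒳 : CrossedModule G H} {𝒴 : CrossedModule G' H'}
    (φ ψ : CrossedModuleHom 𝒳 𝒴) : Prop :=
  ∃ (θ : G → H') (γ : G'), IsFreeHomotopy φ ψ θ γ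

/-- Two crossed module homomorphisms are based homotopic if some free homotopy `(θ, 1)`
with `γ` the identity connects them. -/
def BasedHomotopic {G H G' H' : Type*} [Group G] [Group H] [Group G'] [Group H']
    {𝒳 : CrossedModule G H} {𝒴 : CrossedModule G' H'}
    (φ ψ : CrossedModuleHom 𝒳 𝒴) : Prop :=
  ∃ θ : G → H', IsFreeHomotopy φ ψ θ 1

/-!
`G'` acts on the crossed module homomorphisms `𝒳 → 𝒴` by conjugation on `G'` and by the action
on `H'`, and a free homotopy `(θ, γ)` from `φ` to `ψ` is the same thing as a based homotopy `θ`
from `φ` to `γ • ψ`. Based homotopies compose and invert by pointwise multiplication and inversion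
in `H'`, because `φ₁ = (∂' ∘ θ) ψ₁` and the Peiffer identity make the actions of `φ₁ g` and `ψ₁ g`
differ by conjugation by `θ g`. Since conjugation preserves based homotopy, free homotopy is again
an equivalence relation.
-/

theorem equivalence_exists_rel_smul {Γ α : Type*} [Group Γ] [MulAction Γ α] {r : α → α → Prop}
    (hr : Equivalence r) (r_smul : ∀ (c : Γ) {x y : α}, r x y → r (c • x) (c • y)) :
    Equivalence fun x y => ∃ c : Γ, r x (c • y) where
  refl x := ⟨1, by simpa only [one_smul] using hr.refl x⟩
  symm := by
    rintro x y ⟨c, h⟩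
    exact ⟨c⁻¹, by simpa only [inv_smul_smul] using r_smul c⁻¹ (hr.symm h)⟩
  trans := by
    rintro x y z ⟨c, hxy⟩ ⟨d, hyz⟩
    exact ⟨c * d, by simpa only [mul_smul] using hr.trans hxy (r_smul c hyz)⟩

attribute [ext] CrossedModuleHom

section Homotopy

variable {G H G' H' : Type*} [Group G] [Group H] [Group G'] [Group H']
  {𝒳 : CrossedModule G H} {𝒴 : CrossedModule G' H'}

namespace CrossedModuleHom

/-- The conjugation action of `G'` on crossed module homomorphisms into `∂' : H' → G'`, given by
`γ • (ψ₁, ψ₂) = (γ ψ₁ γ⁻¹, ^γψ₂)`. -/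
instance : MulAction G' (CrossedModuleHom 𝒳 𝒴) where
  smul γ ψ :=
    { φ₁ := (MulAut.conj γ).toMonoidHom.comp ψ.φ₁
      φ₂ := (𝒴.act γ).toMonoidHom.comp ψ.φ₂
      equivariant := fun g h => by simp [ψ.equivariant]
      comm := fun h => by simp [𝒴.bdry_act, ψ.comm] }
  one_smul ψ := by
    ext x
    · exact DFunLike.congr_fun (map_one MulAut.conj) (ψ.φ₁ x)
    · exact DFunLike.congr_fun (map_one 𝒴.act) (ψ.φ₂ x)
  mul_smul γ δ ψ := by
    ext x
    · exact DFunLike.congr_fun (map_mul MulAut.conj γ δ) (ψ.φ₁ x)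
    · exact DFunLike.congr_fun (map_mul 𝒴.act γ δ) (ψ.φ₂ x)

@[simp]
theorem smul_φ₁_apply (γ : G') (ψ : CrossedModuleHom 𝒳 𝒴) (g : G) :
    (γ • ψ).φ₁ g = γ * ψ.φ₁ g * γ⁻¹ :=
  rfl

@[simp]
theorem smul_φ₂_apply (γ : G') (ψ : CrossedModuleHom 𝒳 𝒴) (h : H) :
    (γ • ψ).φ₂ h = 𝒴.act γ (ψ.φ₂ h) :=
  rfl

end CrossedModuleHom

/-- `θ` is a based homotopy from `φ` to `ψ`: a derivation over `ψ₁` by which `φ` differs from `ψ`.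
The conditions are those of `IsFreeHomotopy φ ψ θ 1`, solved for `φ₁` and `φ₂`. -/
structure IsBasedHomotopy (φ ψ : CrossedModuleHom 𝒳 𝒴) (θ : G → H') : Prop where
  protected map_mul (g g' : G) : θ (g * g') = θ g * 𝒴.act (ψ.φ₁ g) (θ g')
  φ₁_eq (g : G) : φ.φ₁ g = 𝒴.bdry (θ g) * ψ.φ₁ g
  φ₂_eq (h : H) : φ.φ₂ h = θ (𝒳.bdry h) * ψ.φ₂ h

namespace IsBasedHomotopy

variable {φ ψ χ : CrossedModuleHom 𝒳 𝒴} {θ θ' : G → H'}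

theorem act_φ₁ (hθ : IsBasedHomotopy φ ψ θ) (g : G) (x : H') :
    𝒴.act (φ.φ₁ g) x = θ g * 𝒴.act (ψ.φ₁ g) x * (θ g)⁻¹ := by
  rw [hθ.φ₁_eq, map_mul, MulAut.mul_apply, 𝒴.peiffer]

protected theorem refl (φ : CrossedModuleHom 𝒳 𝒴) : IsBasedHomotopy φ φ 1 where
  map_mul g g' := by simp
  φ₁_eq g := by simp
  φ₂_eq h := by simp

protected theorem symm (hθ : IsBasedHomotopy φ ψ θ) : IsBasedHomotopy ψ φ θ⁻¹ where
  map_mul g g' := by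
    simp only [Pi.inv_apply, hθ.map_mul, hθ.act_φ₁, map_inv]
    group
  φ₁_eq g := by simp [hθ.φ₁_eq]
  φ₂_eq h := by simp [hθ.φ₂_eq]

protected theorem trans (hθ : IsBasedHomotopy φ ψ θ) (hθ' : IsBasedHomotopy ψ χ θ') :
    IsBasedHomotopy φ χ (θ * θ') where
  map_mul g g' :=
    calc θ (g * g') * θ' (g * g')
      _ = θ g * 𝒴.act (ψ.φ₁ g) (θ g') * (θ' g * 𝒴.act (χ.φ₁ g) (θ' g')) := by
        rw [hθ.map_mul, hθ'.map_mul]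
      _ = θ g * (θ' g * 𝒴.act (χ.φ₁ g) (θ g') * (θ' g)⁻¹) *
          (θ' g * 𝒴.act (χ.φ₁ g) (θ' g')) := by
        rw [hθ'.act_φ₁]
      _ = θ g * θ' g * 𝒴.act (χ.φ₁ g) (θ g' * θ' g') := by
        rw [map_mul]
        group
  φ₁_eq g := by simp [hθ.φ₁_eq, hθ'.φ₁_eq, mul_assoc]
  φ₂_eq h := by simp [hθ.φ₂_eq, hθ'.φ₂_eq, mul_assoc]

theorem smul (hθ : IsBasedHomotopy φ ψ θ) (γ : G') :
    IsBasedHomotopy (γ • φ) (γ • ψ) fun g => 𝒴.act γ (θ g) where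
  map_mul g g' := by simp [hθ.map_mul]
  φ₁_eq g := by
    simp only [CrossedModuleHom.smul_φ₁_apply, hθ.φ₁_eq, 𝒴.bdry_act]
    group
  φ₂_eq h := by simp only [CrossedModuleHom.smul_φ₂_apply, hθ.φ₂_eq, map_mul]

end IsBasedHomotopy

variable {φ ψ : CrossedModuleHom 𝒳 𝒴}

theorem isFreeHomotopy_iff_isBasedHomotopy_smul {θ : G → H'} {γ : G'} :
    IsFreeHomotopy φ ψ θ γ ↔ IsBasedHomotopy φ (γ • ψ) θ := by
  have φ₁_eq_iff (g : G) : 𝒴.bdry (θ g) = φ.φ₁ g * γ * (ψ.φ₁ g)⁻¹ * γ⁻¹ ↔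
      φ.φ₁ g = 𝒴.bdry (θ g) * (γ • ψ).φ₁ g := by
    rw [CrossedModuleHom.smul_φ₁_apply, ← mul_inv_eq_iff_eq_mul (a := φ.φ₁ g), eq_comm]
    simp only [mul_inv_rev, inv_inv, mul_assoc]
  have φ₂_eq_iff (h : H) : θ (𝒳.bdry h) = φ.φ₂ h * (𝒴.act γ (ψ.φ₂ h))⁻¹ ↔
      φ.φ₂ h = θ (𝒳.bdry h) * (γ • ψ).φ₂ h := by
    rw [eq_mul_inv_iff_mul_eq, eq_comm, CrossedModuleHom.smul_φ₂_apply]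
  simp only [IsFreeHomotopy, φ₁_eq_iff, φ₂_eq_iff]
  exact ⟨fun ⟨hmul, h₁, h₂⟩ => ⟨hmul, h₁, h₂⟩, fun hθ => ⟨hθ.map_mul, hθ.φ₁_eq, hθ.φ₂_eq⟩⟩

theorem basedHomotopic_iff_exists_isBasedHomotopy :
    BasedHomotopic φ ψ ↔ ∃ θ, IsBasedHomotopy φ ψ θ := by
  simp only [BasedHomotopic, isFreeHomotopy_iff_isBasedHomotopy_smul, one_smul]

theorem freeHomotopic_iff_exists_basedHomotopic_smul :
    FreeHomotopic φ ψ ↔ ∃ γ : G', BasedHomotopic φ (γ • ψ) := by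
  simp only [FreeHomotopic, isFreeHomotopy_iff_isBasedHomotopy_smul,
    basedHomotopic_iff_exists_isBasedHomotopy]
  exact exists_comm

theorem BasedHomotopic.smul (γ : G') (h : BasedHomotopic φ ψ) :
    BasedHomotopic (γ • φ) (γ • ψ) := by
  rw [basedHomotopic_iff_exists_isBasedHomotopy] at h ⊢
  obtain ⟨θ, hθ⟩ := h
  exact ⟨_, hθ.smul γ⟩

variable (𝒳 𝒴) in
theorem basedHomotopic_equivalence :
    Equivalence (BasedHomotopic : CrossedModuleHom 𝒳 𝒴 → CrossedModuleHom 𝒳 𝒴 → Prop) where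
  refl φ := basedHomotopic_iff_exists_isBasedHomotopy.2 ⟨1, .refl φ⟩
  symm := by
    simp only [basedHomotopic_iff_exists_isBasedHomotopy]
    rintro φ ψ ⟨θ, hθ⟩
    exact ⟨θ⁻¹, hθ.symm⟩
  trans := by
    simp only [basedHomotopic_iff_exists_isBasedHomotopy]
    rintro φ ψ χ ⟨θ, hθ⟩ ⟨θ', hθ'⟩
    exact ⟨θ * θ', hθ.trans hθ'⟩

variable (𝒳 𝒴) in
theorem freeHomotopic_equivalence :
    Equivalence (FreeHomotopic : CrossedModuleHom 𝒳 𝒴 → CrossedModuleHom 𝒳 𝒴 → Prop) := by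
  have freeHomotopic_eq : (FreeHomotopic : CrossedModuleHom 𝒳 𝒴 → CrossedModuleHom 𝒳 𝒴 → Prop) =
      fun φ ψ => ∃ γ : G', BasedHomotopic φ (γ • ψ) := by
    ext φ ψ
    exact freeHomotopic_iff_exists_basedHomotopic_smul
  rw [freeHomotopic_eq]
  exact equivalence_exists_rel_smul (basedHomotopic_equivalence 𝒳 𝒴) fun γ => .smul γ

end Homotopy

/-- Based homotopy and free homotopy are both equivalence relations (reflexive, symmetric
and transitive) on the set of homomorphisms between two crossed modules. -/
theorem basedHomotopic_and_freeHomotopic_equivalence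
    {G H G' H' : Type*} [Group G] [Group H] [Group G'] [Group H']
    (𝒳 : CrossedModule G H) (𝒴 : CrossedModule G' H') :
    Equivalence (@BasedHomotopic G H G' H' _ _ _ _ 𝒳 𝒴) ∧
      Equivalence (@FreeHomotopic G H G' H' _ _ _ _ 𝒳 𝒴) :=
  ⟨basedHomotopic_equivalence 𝒳 𝒴, freeHomotopic_equivalence 𝒳 𝒴⟩
end
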